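/- For the doubly symmetric binary source with crossover probability ρ ∈ [0,1/2] and Hamming distortions, with d* = 1/2 − (1/2)√(1−2ρ), for every d ∈ (d*, 1/2] the common-reconstruction rate-distortion function satisfies both R_CR(d,d) ≠ h(ρ) − h(d) and R_CR(d,d) ≤ h(d) − ρ − (1−ρ)·h((2d−ρ)/(2(1−ρ))). -/

import Mathlib

open scoped BigOperators Classical

noncomputable section

namespace TWR

/-- Base-2 Shannon entropy of a finitely supported distribution (with the
convention `0 * log 0 = 0`, automatic since `Real.logb 2 0 = 0`). -/
def H2 {α : Type} [Fintype α] (p : α → ℝ) : ℝ :=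
  -∑ a, p a * Real.logb 2 (p a)

/-- `p` is a probability mass function. -/
def IsPmf {α : Type} [Fintype α] (p : α → ℝ) : Prop :=
  (∀ a, 0 ≤ p a) ∧ ∑ a, p a = 1

/-- `W` is a conditional pmf. -/
def IsCondPmf {α β : Type} [Fintype β] (W : α → β → ℝ) : Prop :=
  ∀ a, IsPmf (W a)

/-- Mutual information `I(A;B)` (base 2) of a joint pmf on `α × β`. -/
def MI {α β : Type} [Fintype α] [Fintype β] (p : α × β → ℝ) : ℝ :=
  H2 (fun a => ∑ b, p (a, b)) + H2 (fun b => ∑ a, p (a, b)) - H2 p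

/-- Conditional entropy `H(A|B)` of a joint pmf on `α × β`. -/
def condH {α β : Type} [Fintype α] [Fintype β] (p : α × β → ℝ) : ℝ :=
  H2 p - H2 (fun b => ∑ a, p (a, b))

/-- Conditional mutual information `I(A;C|B)` of a joint pmf on `α × β × γ`,
conditioning on the middle coordinate (`I(A;C|B) = H(A,B)+H(B,C)-H(A,B,C)-H(B)`). -/
def condMI {α β γ : Type} [Fintype α] [Fintype β] [Fintype γ] (p : α × β × γ → ℝ) : ℝ :=
  H2 (fun ab : α × β => ∑ c, p (ab.1, ab.2, c)) +
    H2 (fun bc : β × γ => ∑ a, p (a, bc.1, bc.2)) -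
    H2 p - H2 (fun b : β => ∑ a, ∑ c, p (a, b, c))

/-- Markov chain `A − B − C` for a joint pmf on `α × β × γ`. -/
def Markov {α β γ : Type} [Fintype α] [Fintype β] [Fintype γ] (p : α × β × γ → ℝ) : Prop :=
  ∀ a b c, p (a, b, c) * (∑ a', ∑ c', p (a', b, c')) =
    (∑ c', p (a, b, c')) * (∑ a', p (a', b, c))

variable {𝒳 𝒴 Xh Yh 𝒲 𝒰 𝒱 : Type}
variable [Fintype 𝒳] [Fintype 𝒴] [Fintype Xh] [Fintype Yh]
variable [Fintype 𝒲] [Fintype 𝒰] [Fintype 𝒱]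

/-- The i.i.d. block source. -/
def iid (q : 𝒳 × 𝒴 → ℝ) (n : ℕ) : (Fin n → 𝒳) × (Fin n → 𝒴) → ℝ :=
  fun xy => ∏ i, q (xy.1 i, xy.2 i)

/-- Average distortion at receiver 1 of the RD code `(f, g1, ·)`. -/
def Delta1 (q : 𝒳 × 𝒴 → ℝ) (δ1 : 𝒳 → Xh → ℝ) {n m : ℕ}
    (f : (Fin n → 𝒳) × (Fin n → 𝒴) → Fin m)
    (g1 : Fin m × (Fin n → 𝒴) → Fin n → Xh) : ℝ :=
  ∑ xy : (Fin n → 𝒳) × (Fin n → 𝒴),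
    iid q n xy * ((n : ℝ)⁻¹ * ∑ i, δ1 (xy.1 i) (g1 (f xy, xy.2) i))

/-- Average distortion at receiver 2 of the RD code `(f, ·, g2)`. -/
def Delta2 (q : 𝒳 × 𝒴 → ℝ) (δ2 : 𝒴 → Yh → ℝ) {n m : ℕ}
    (f : (Fin n → 𝒳) × (Fin n → 𝒴) → Fin m)
    (g2 : Fin m × (Fin n → 𝒳) → Fin n → Yh) : ℝ :=
  ∑ xy : (Fin n → 𝒳) × (Fin n → 𝒴),
    iid q n xy * ((n : ℝ)⁻¹ * ∑ i, δ2 (xy.2 i) (g2 (f xy, xy.1) i))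

/-- `r` is a `(d1,d2)`-achievable rate (source coding). -/
def RDAchievable (q : 𝒳 × 𝒴 → ℝ) (δ1 : 𝒳 → Xh → ℝ) (δ2 : 𝒴 → Yh → ℝ)
    (d1 d2 r : ℝ) : Prop :=
  ∀ ε > (0 : ℝ), ∃ (n m : ℕ) (f : (Fin n → 𝒳) × (Fin n → 𝒴) → Fin m)
    (g1 : Fin m × (Fin n → 𝒴) → Fin n → Xh)
    (g2 : Fin m × (Fin n → 𝒳) → Fin n → Yh),
    0 < n ∧ Real.logb 2 m / n ≤ r + ε ∧
    Delta1 q δ1 f g1 ≤ d1 + ε ∧ Delta2 q δ2 f g2 ≤ d2 + ε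

/-- The rate-distortion function `R(d1,d2)`. -/
def RD (q : 𝒳 × 𝒴 → ℝ) (δ1 : 𝒳 → Xh → ℝ) (δ2 : 𝒴 → Yh → ℝ) (d1 d2 : ℝ) : ℝ :=
  sInf {r : ℝ | 0 ≤ r ∧ RDAchievable q δ1 δ2 d1 d2 r}

/-- `r` is `(d1,d2)`-achievable with common reconstructions. -/
def CRAchievable (q : 𝒳 × 𝒴 → ℝ) (δ1 : 𝒳 → Xh → ℝ) (δ2 : 𝒴 → Yh → ℝ)
    (d1 d2 r : ℝ) : Prop :=
  ∀ ε > (0 : ℝ), ∃ (n m : ℕ) (f : (Fin n → 𝒳) × (Fin n → 𝒴) → Fin m)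
    (g1 : Fin m × (Fin n → 𝒴) → Fin n → Xh)
    (g2 : Fin m × (Fin n → 𝒳) → Fin n → Yh)
    (φ1 : Fin m × (Fin n → 𝒴) → Fin n → Yh)
    (φ2 : Fin m × (Fin n → 𝒳) → Fin n → Xh),
    0 < n ∧ Real.logb 2 m / n ≤ r + ε ∧
    Delta1 q δ1 f g1 ≤ d1 + ε ∧ Delta2 q δ2 f g2 ≤ d2 + ε ∧
    (∑ xy : (Fin n → 𝒳) × (Fin n → 𝒴),
      if φ2 (f xy, xy.1) = g1 (f xy, xy.2) then 0 else iid q n xy) ≤ ε ∧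
    (∑ xy : (Fin n → 𝒳) × (Fin n → 𝒴),
      if φ1 (f xy, xy.2) = g2 (f xy, xy.1) then 0 else iid q n xy) ≤ ε

/-- The common-reconstruction rate-distortion function `R_CR(d1,d2)`. -/
def CRRD (q : 𝒳 × 𝒴 → ℝ) (δ1 : 𝒳 → Xh → ℝ) (δ2 : 𝒴 → Yh → ℝ) (d1 d2 : ℝ) : ℝ :=
  sInf {r : ℝ | 0 ≤ r ∧ CRAchievable q δ1 δ2 d1 d2 r}

/-- The conditional rate-distortion function `R_{X|Y}(d1)`. -/
def condRD (q : 𝒳 × 𝒴 → ℝ) (δ1 : 𝒳 → Xh → ℝ) (d1 : ℝ) : ℝ :=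
  sInf {r : ℝ | ∃ W : 𝒳 × 𝒴 → Xh → ℝ, IsCondPmf W ∧
    (∑ x, ∑ y, ∑ xh, q (x, y) * W (x, y) xh * δ1 x xh) ≤ d1 ∧
    r = condMI (fun t : 𝒳 × 𝒴 × Xh => q (t.1, t.2.1) * W (t.1, t.2.1) t.2.2)}

/-- Swap the two components of a joint source. -/
def swap (q : 𝒳 × 𝒴 → ℝ) : 𝒴 × 𝒳 → ℝ := fun t => q (t.2, t.1)

/-- The marginal rate-distortion function `R_X(d)`. -/
def margRD (qX : 𝒳 → ℝ) (δ1 : 𝒳 → Xh → ℝ) (d1 : ℝ) : ℝ :=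
  sInf {r : ℝ | ∃ W : 𝒳 → Xh → ℝ, IsCondPmf W ∧
    (∑ x, ∑ xh, qX x * W x xh * δ1 x xh) ≤ d1 ∧
    r = MI (fun t : 𝒳 × Xh => qX t.1 * W t.1 t.2)}

def margX (q : 𝒳 × 𝒴 → ℝ) : 𝒳 → ℝ := fun x => ∑ y, q (x, y)
def margY (q : 𝒳 × 𝒴 → ℝ) : 𝒴 → ℝ := fun y => ∑ x, q (x, y)

/-- The joint rate-distortion function `R_{XY}(d1,d2)`. -/
def jointRD (q : 𝒳 × 𝒴 → ℝ) (δ1 : 𝒳 → Xh → ℝ) (δ2 : 𝒴 → Yh → ℝ) (d1 d2 : ℝ) : ℝ :=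
  sInf {r : ℝ | ∃ W : 𝒳 × 𝒴 → Xh × Yh → ℝ, IsCondPmf W ∧
    (∑ xy : 𝒳 × 𝒴, ∑ z : Xh × Yh, q xy * W xy z * δ1 xy.1 z.1) ≤ d1 ∧
    (∑ xy : 𝒳 × 𝒴, ∑ z : Xh × Yh, q xy * W xy z * δ2 xy.2 z.2) ≤ d2 ∧
    r = MI (fun t : (𝒳 × 𝒴) × (Xh × Yh) => q t.1 * W t.1 t.2)}

/-- The Wyner–Ziv rate-distortion function `R^{WZ}_{X|Y}(d1)`
(with auxiliary alphabet of cardinality `|𝒳| + 1`). -/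
def wzRD (q : 𝒳 × 𝒴 → ℝ) (δ1 : 𝒳 → Xh → ℝ) (d1 : ℝ) : ℝ :=
  sInf {r : ℝ | ∃ p : Fin (Fintype.card 𝒳 + 1) × 𝒳 × 𝒴 → ℝ, IsPmf p ∧
    (∀ x y, (∑ a, p (a, x, y)) = q (x, y)) ∧ Markov p ∧
    (∃ π1 : Fin (Fintype.card 𝒳 + 1) × 𝒴 → Xh,
      (∑ a, ∑ x, ∑ y, p (a, x, y) * δ1 x (π1 (a, y))) ≤ d1) ∧
    r = condMI (fun t : 𝒳 × 𝒴 × Fin (Fintype.card 𝒳 + 1) => p (t.2.2, t.1, t.2.1))}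

/-- The set over which the single-letter CR formula
`max{I(X;X̂,Ŷ|Y), I(Y;X̂,Ŷ|X)}` is minimised. -/
def crFormulaSet (q : 𝒳 × 𝒴 → ℝ) (δ1 : 𝒳 → Xh → ℝ) (δ2 : 𝒴 → Yh → ℝ)
    (d1 d2 : ℝ) : Set ℝ :=
  {r : ℝ | ∃ W : 𝒳 × 𝒴 → Xh × Yh → ℝ, IsCondPmf W ∧
    (∑ x, ∑ y, ∑ z : Xh × Yh, q (x, y) * W (x, y) z * δ1 x z.1) ≤ d1 ∧
    (∑ x, ∑ y, ∑ z : Xh × Yh, q (x, y) * W (x, y) z * δ2 y z.2) ≤ d2 ∧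
    r = max
      (condMI (fun t : 𝒳 × 𝒴 × (Xh × Yh) => q (t.1, t.2.1) * W (t.1, t.2.1) t.2.2))
      (condMI (fun t : 𝒴 × 𝒳 × (Xh × Yh) => q (t.2.1, t.1) * W (t.2.1, t.1) t.2.2))}

/-- Joint law of source blocks and channel outputs for a JSC encoder. -/
def jscP (q : 𝒳 × 𝒴 → ℝ) (qUV : 𝒲 → 𝒰 × 𝒱 → ℝ) {n m : ℕ}
    (f : (Fin n → 𝒳) × (Fin n → 𝒴) → Fin m → 𝒲)
    (x : Fin n → 𝒳) (y : Fin n → 𝒴) (u : Fin m → 𝒰) (v : Fin m → 𝒱) : ℝ :=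
  (∏ i, q (x i, y i)) * ∏ j, qUV (f (x, y) j) (u j, v j)

/-- `(d1,d2)` is achievable by joint source-channel coding with source rate `κs`
and channel rate `κc` (bandwidth expansion `κc/κs`). -/
def JSCAchievable (q : 𝒳 × 𝒴 → ℝ) (qUV : 𝒲 → 𝒰 × 𝒱 → ℝ)
    (δ1 : 𝒳 → Xh → ℝ) (δ2 : 𝒴 → Yh → ℝ) (κs κc d1 d2 : ℝ) : Prop :=
  ∀ ε > (0 : ℝ), ∃ (t n m : ℕ) (f : (Fin n → 𝒳) × (Fin n → 𝒴) → Fin m → 𝒲)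
    (g1 : (Fin m → 𝒰) × (Fin n → 𝒴) → Fin n → Xh)
    (g2 : (Fin m → 𝒱) × (Fin n → 𝒳) → Fin n → Yh),
    0 < t ∧ (n : ℝ) = κs * t ∧ (m : ℝ) = κc * t ∧
    (∑ x : Fin n → 𝒳, ∑ y : Fin n → 𝒴, ∑ u : Fin m → 𝒰, ∑ v : Fin m → 𝒱,
      jscP q qUV f x y u v * ((n : ℝ)⁻¹ * ∑ i, δ1 (x i) (g1 (u, y) i))) ≤ d1 + ε ∧
    (∑ x : Fin n → 𝒳, ∑ y : Fin n → 𝒴, ∑ u : Fin m → 𝒰, ∑ v : Fin m → 𝒱,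
      jscP q qUV f x y u v * ((n : ℝ)⁻¹ * ∑ i, δ2 (y i) (g2 (v, x) i))) ≤ d2 + ε

/-- `(d1,d2)` is achievable by joint source-channel coding with common
reconstructions, source rate `κs` and channel rate `κc`. -/
def CRJSCAchievable (q : 𝒳 × 𝒴 → ℝ) (qUV : 𝒲 → 𝒰 × 𝒱 → ℝ)
    (δ1 : 𝒳 → Xh → ℝ) (δ2 : 𝒴 → Yh → ℝ) (κs κc d1 d2 : ℝ) : Prop :=
  ∀ ε > (0 : ℝ), ∃ (t n m : ℕ) (f : (Fin n → 𝒳) × (Fin n → 𝒴) → Fin m → 𝒲)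
    (g1 : (Fin m → 𝒰) × (Fin n → 𝒴) → Fin n → Xh)
    (g2 : (Fin m → 𝒱) × (Fin n → 𝒳) → Fin n → Yh)
    (φ1 : (Fin m → 𝒰) × (Fin n → 𝒴) → Fin n → Yh)
    (φ2 : (Fin m → 𝒱) × (Fin n → 𝒳) → Fin n → Xh),
    0 < t ∧ (n : ℝ) = κs * t ∧ (m : ℝ) = κc * t ∧
    (∑ x : Fin n → 𝒳, ∑ y : Fin n → 𝒴, ∑ u : Fin m → 𝒰, ∑ v : Fin m → 𝒱,
      jscP q qUV f x y u v * ((n : ℝ)⁻¹ * ∑ i, δ1 (x i) (g1 (u, y) i))) ≤ d1 + ε ∧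
    (∑ x : Fin n → 𝒳, ∑ y : Fin n → 𝒴, ∑ u : Fin m → 𝒰, ∑ v : Fin m → 𝒱,
      jscP q qUV f x y u v * ((n : ℝ)⁻¹ * ∑ i, δ2 (y i) (g2 (v, x) i))) ≤ d2 + ε ∧
    (∑ x : Fin n → 𝒳, ∑ y : Fin n → 𝒴, ∑ u : Fin m → 𝒰, ∑ v : Fin m → 𝒱,
      if φ2 (v, x) = g1 (u, y) then 0 else jscP q qUV f x y u v) ≤ ε ∧
    (∑ x : Fin n → 𝒳, ∑ y : Fin n → 𝒴, ∑ u : Fin m → 𝒰, ∑ v : Fin m → 𝒱,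
      if φ1 (u, y) = g2 (v, x) then 0 else jscP q qUV f x y u v) ≤ ε

/-- `I(W;U)` under the joint law `pW · qUV` (U-marginal of the broadcast channel). -/
def chMIU (qUV : 𝒲 → 𝒰 × 𝒱 → ℝ) (pW : 𝒲 → ℝ) : ℝ :=
  MI (fun t : 𝒲 × 𝒰 => pW t.1 * ∑ v, qUV t.1 (t.2, v))

/-- `I(W;V)` under the joint law `pW · qUV` (V-marginal of the broadcast channel). -/
def chMIV (qUV : 𝒲 → 𝒰 × 𝒱 → ℝ) (pW : 𝒲 → ℝ) : ℝ :=
  MI (fun t : 𝒲 × 𝒱 => pW t.1 * ∑ u, qUV t.1 (u, t.2))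

/-- The doubly symmetric binary source with crossover probability `ρ`. -/
def dsbs (ρ : ℝ) : Bool × Bool → ℝ :=
  fun t => if t.1 = t.2 then (1 - ρ) / 2 else ρ / 2

/-- The Hamming distortion measure. -/
def dHam {α : Type} : α → α → ℝ := fun a b => if a = b then 0 else 1

/-- The binary entropy function (base 2). -/
def binEnt (x : ℝ) : ℝ := -(x * Real.logb 2 x) - (1 - x) * Real.logb 2 (1 - x)

/-- A difference distortion measure built from a per-letter function of the
(modular) difference. -/
def diffD {l : ℕ} (δ : Fin l → ℝ) : Fin l → Fin l → ℝ := fun a b => δ (a - b)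

/-- Capacity of the modulo-additive channel with noise `pN` and input
distortion constraint `d`. -/
def Cadd {l : ℕ} (δ : Fin l → ℝ) (d : ℝ) (pN : Fin l → ℝ) : ℝ :=
  sSup {r : ℝ | ∃ pW : Fin l → ℝ, IsPmf pW ∧ (∑ w, pW w * δ w) ≤ d ∧
    r = MI (fun t : Fin l × Fin l => pW t.1 * pN (t.2 - t.1))}

/-- The minimax (worst-noise) capacity under distortion constraint `d`. -/
def Cworst {l : ℕ} (δ : Fin l → ℝ) (d : ℝ) : ℝ :=
  sInf {r : ℝ | ∃ pN : Fin l → ℝ, IsPmf pN ∧ (∑ x, pN x * δ x) ≤ d ∧ r = Cadd δ d pN}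

/-- Wyner's common information `K(X;Y)` (auxiliary alphabet of size 4). -/
def wynerK (q : 𝒳 × 𝒴 → ℝ) : ℝ :=
  sInf {r : ℝ | ∃ W : 𝒳 × 𝒴 → Fin 4 → ℝ, IsCondPmf W ∧
    Markov (fun t : 𝒳 × Fin 4 × 𝒴 => q (t.1, t.2.2) * W (t.1, t.2.2) t.2.1) ∧
    r = MI (fun t : (𝒳 × 𝒴) × Fin 4 => q t.1 * W t.1 t.2)}

/-- The one-description (Kimura–Uyematsu) upper bound `R_U*(d1,d2)`. -/
def oneDescUB (q : 𝒳 × 𝒴 → ℝ) (δ1 : 𝒳 → Xh → ℝ) (δ2 : 𝒴 → Yh → ℝ) (d1 d2 : ℝ) : ℝ :=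
  sInf {r : ℝ | ∃ W : 𝒳 × 𝒴 → Fin (Fintype.card 𝒳 * Fintype.card 𝒴 + 2) → ℝ,
    IsCondPmf W ∧
    (∃ π1 : Fin (Fintype.card 𝒳 * Fintype.card 𝒴 + 2) × 𝒴 → Xh,
      (∑ x, ∑ y, ∑ c, q (x, y) * W (x, y) c * δ1 x (π1 (c, y))) ≤ d1) ∧
    (∃ π2 : Fin (Fintype.card 𝒳 * Fintype.card 𝒴 + 2) × 𝒳 → Yh,
      (∑ x, ∑ y, ∑ c, q (x, y) * W (x, y) c * δ2 y (π2 (c, x))) ≤ d2) ∧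
    r = max
      (condMI (fun t : 𝒳 × 𝒴 × Fin (Fintype.card 𝒳 * Fintype.card 𝒴 + 2) =>
        q (t.1, t.2.1) * W (t.1, t.2.1) t.2.2))
      (condMI (fun t : 𝒴 × 𝒳 × Fin (Fintype.card 𝒳 * Fintype.card 𝒴 + 2) =>
        q (t.2.1, t.1) * W (t.2.1, t.1) t.2.2))}

end TWR

/-!
*Lower bound.* A code of rate close to `h(ρ) - h(d)` would have to meet the conditional
rate-distortion bound with equality at both receivers, so that `X - X̂` and `Y - Ŷ` would be
Bernoulli(`d`) noise, uncorrelated with everything the respective receiver knows. As both receivers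
know `X̂` and `Ŷ`, the signs satisfy `E[XY] = (1 - 2d)² E[X̂Ŷ]`, whence `1 - 2ρ ≤ (1 - 2d)²`, which
fails for `d > d*`. Quantitatively, reweighting the reconstruction kernel in the direction of the
correlation gains `γ² / 128` nats over `h(ρ) - h(d)`, where `γ = 1 - 2ρ - (1 - 2d)²`.

*Upper bound.* Let `W` be a test channel from source pairs to a common reconstruction, and let
`V₁`, `V₂` be reference channels from `Y` and from `X`. Random coding with random binning achieves
the larger of the divergences of `W` from `V₁` and from `V₂`: each receiver finds the announced
codeword by searching its bin for a word that is likely under its own reference channel. The stated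
bound comes from the `W` that passes `X` through a binary symmetric channel when `X = Y` and tosses
a fair coin when `X ≠ Y`.
-/

namespace TWR

open Real Finset Topology

section ProductLaws

variable {α β ι : Type} [Fintype α] [Fintype β] [Fintype ι] [DecidableEq ι]

theorem IsPmf.pi {p : ι → α → ℝ} (hp : ∀ i, IsPmf (p i)) :
    IsPmf fun a : ι → α => ∏ i, p i (a i) :=
  ⟨fun a => prod_nonneg fun i _ => (hp i).1 (a i), by
    simp only [← Fintype.prod_sum, (hp _).2, prod_const_one]⟩

theorem IsPmf.sum_pi_mul_prod {p : ι → α → ℝ} (hp : ∀ i, IsPmf (p i)) (s : Finset ι)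
    (z : ι → α → ℝ) :
    ∑ a : ι → α, (∏ j, p j (a j)) * ∏ j ∈ s, z j (a j) = ∏ j ∈ s, ∑ b, p j b * z j b := by
  have absorb (a : ι → α) : (∏ j, p j (a j)) * ∏ j ∈ s, z j (a j) =
      ∏ j, p j (a j) * (if j ∈ s then z j (a j) else 1) := by
    rw [prod_mul_distrib, Fintype.prod_ite_mem]
  have factor (j : ι) : ∑ b, p j b * (if j ∈ s then z j b else 1) =
      if j ∈ s then ∑ b, p j b * z j b else 1 := by
    split_ifs
    · rfl
    · simp only [mul_one, (hp j).2]
  simp only [absorb, ← Fintype.prod_sum (f := fun j b => p j b * (if j ∈ s then z j b else 1)),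
    factor, Fintype.prod_ite_mem]

theorem IsPmf.sum_pi_mul_sum {p : ι → α → ℝ} (hp : ∀ i, IsPmf (p i)) (z : ι → α → ℝ) :
    ∑ a : ι → α, (∏ j, p j (a j)) * ∑ i, z i (a i) = ∑ i, ∑ b, p i b * z i b := by
  simp only [mul_sum]
  rw [sum_comm]
  exact sum_congr rfl fun i _ => by simpa using IsPmf.sum_pi_mul_prod hp {i} z

theorem sum_prod_pi_eq_sum_pi_prod (F : (ι → α × β) → ℝ) :
    ∑ s : (ι → α) × (ι → β), F (fun i => (s.1 i, s.2 i)) = ∑ a, F a :=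
  (Equiv.arrowProdEquivProdArrow ι (fun _ => α) fun _ => β).symm.sum_comp F

theorem IsPmf.iid {q : α × β → ℝ} (hq : IsPmf q) (n : ℕ) : IsPmf (iid q n) :=
  ⟨fun _ => prod_nonneg fun _ _ => hq.1 _,
    (sum_prod_pi_eq_sum_pi_prod fun a => ∏ i, q (a i)).trans (IsPmf.pi fun _ : Fin n => hq).2⟩

theorem IsPmf.sum_iid_mul_sum {q : α × β → ℝ} (hq : IsPmf q) (n : ℕ) (z : α × β → ℝ) :
    ∑ s, TWR.iid q n s * ∑ i, z (s.1 i, s.2 i) = n * ∑ t, q t * z t := by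
  refine (sum_prod_pi_eq_sum_pi_prod fun a => (∏ i, q (a i)) * ∑ i, z (a i)).trans ?_
  rw [IsPmf.sum_pi_mul_sum (fun _ : Fin n => hq), sum_const, card_univ, Fintype.card_fin,
    nsmul_eq_mul]

end ProductLaws

section Marginals

variable {α β : Type} [Fintype α]

theorem IsPmf.sum_mul_const {p : α → ℝ} (hp : IsPmf p) (c : ℝ) : ∑ a, p a * c = c := by
  rw [← sum_mul, hp.2, one_mul]

theorem margY_iid (q : α × β → ℝ) (n : ℕ) (y : Fin n → β) :
    margY (iid q n) y = ∏ i, margY q (y i) :=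
  (Fintype.prod_sum fun i x => q (x, y i)).symm

theorem le_margY {q : α × β → ℝ} (hq : ∀ s, 0 ≤ q s) (s : α × β) : q s ≤ margY q s.2 :=
  single_le_sum (f := fun x => q (x, s.2)) (fun _ _ => hq _) (mem_univ s.1)

theorem sum_margY [Fintype β] (q : α × β → ℝ) : ∑ y, margY q y = ∑ s, q s :=
  (Fintype.sum_prod_type_right q).symm

end Marginals

section Gibbs

variable {α β κ : Type} [Fintype α] [Fintype β]

theorem IsPmf.sum_mul_log_div_le {p g : α → ℝ} (hp : IsPmf p) (hg : ∀ a, 0 ≤ g a)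
    (hpg : ∀ a, g a = 0 → p a = 0) : ∑ a, p a * log (g a / p a) ≤ log (∑ a, g a) := by
  have sum_pos : 0 < ∑ a, g a := by
    refine (sum_nonneg fun a _ => hg a).lt_of_ne' fun h => ?_
    have g_zero := (sum_eq_zero_iff_of_nonneg fun a _ => hg a).1 h
    exact one_ne_zero (hp.2.symm.trans (sum_eq_zero fun a ha => hpg a (g_zero a ha)))
  have pointwise (a : α) :
      p a * log (g a / p a) ≤ g a / (∑ a, g a) - p a + p a * log (∑ a, g a) := by
    rcases (hp.1 a).eq_or_lt with hpa | hpa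
    · rw [← hpa]
      simpa using div_nonneg (hg a) sum_pos.le
    · have hga : 0 < g a := (hg a).lt_of_ne' fun h => hpa.ne' (hpg a h)
      have split_log :
          log (g a / p a) = log (g a / (∑ a, g a) / p a) + log (∑ a, g a) := by
        rw [← log_mul (by positivity) sum_pos.ne']
        congr 1
        field_simp
      have := mul_le_mul_of_nonneg_left
        (log_le_sub_one_of_pos (show 0 < g a / (∑ a, g a) / p a by positivity)) hpa.le
      rw [split_log, mul_add]
      rw [mul_sub, mul_div_cancel₀ _ hpa.ne'] at this
      linarith
  calc ∑ a, p a * log (g a / p a)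
      ≤ ∑ a, (g a / (∑ a, g a) - p a + p a * log (∑ a, g a)) := sum_le_sum fun a _ => pointwise a
    _ = log (∑ a, g a) := by
      rw [sum_add_distrib, sum_sub_distrib, ← sum_div, hp.2, div_self sum_pos.ne',
        hp.sum_mul_const]
      ring

/-- The conditional relative entropy `D(W ‖ V | q)` of two channels, in nats. -/
def condDiv (q : α → ℝ) (W V : α → β → ℝ) : ℝ :=
  ∑ s, q s * ∑ z, W s z * log (W s z / V s z)

theorem condDiv_nonneg {q : α → ℝ} {W V : α → β → ℝ} (hq : ∀ s, 0 ≤ q s) (hW : IsCondPmf W)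
    (hV : IsCondPmf V) (hVpos : ∀ s z, 0 < V s z) : 0 ≤ condDiv q W V := by
  refine sum_nonneg fun s _ => mul_nonneg (hq s) ?_
  have gibbs := (hW s).sum_mul_log_div_le (hV s).1 fun z hz => absurd hz (hVpos s z).ne'
  rw [(hV s).2, log_one] at gibbs
  have flip (z : β) : W s z * log (W s z / V s z) = -(W s z * log (V s z / W s z)) := by
    rw [← inv_div, log_inv, mul_neg]
  simp only [flip, sum_neg_distrib]
  linarith

/-- The conditional entropy `H(X|Y)` of a joint law of `(X, Y)`, in nats. -/
def condEnt (q : α × β → ℝ) : ℝ :=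
  ∑ s, q s * log (margY q s.2 / q s)

theorem condEnt_iid {q : α × β → ℝ} (hq : IsPmf q) (n : ℕ) :
    condEnt (iid q n) = n * condEnt q := by
  rw [condEnt, condEnt, ← hq.sum_iid_mul_sum n fun t => log (margY q t.2 / q t)]
  refine sum_congr rfl fun s _ => ?_
  by_cases hs : iid q n s = 0
  · rw [hs, zero_mul, zero_mul]
  have hq_pos (i : Fin n) : 0 < q (s.1 i, s.2 i) :=
    (hq.1 _).lt_of_ne' (prod_ne_zero_iff.1 hs i (mem_univ i))
  rw [margY_iid, iid, ← prod_div_distrib, log_prod]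
  exact fun i _ => (div_pos ((hq_pos i).trans_le (le_margY hq.1 _)) (hq_pos i)).ne'

/-- The law `P_Y K` compares the source with an arbitrary reconstruction kernel `K` that depends
on the message; summing it over all messages costs only the number of messages. -/
theorem sum_mul_log_add_condEnt_le_log_card [Fintype κ] {P : α × β → ℝ} (hP : IsPmf P)
    (f : α × β → κ) {K : κ → β → α → ℝ} (hK : ∀ k y, IsPmf (K k y))
    (hKpos : ∀ k y x, 0 < K k y x) :
    ∑ s, P s * log (K (f s) s.2 s.1) + condEnt P ≤ log (Fintype.card κ) := by
  set g : α × β → ℝ := fun s => margY P s.2 * K (f s) s.2 s.1 with hg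
  have margY_nonneg (y : β) : 0 ≤ margY P y := sum_nonneg fun _ _ => hP.1 _
  have g_nonneg (s : α × β) : 0 ≤ g s := mul_nonneg (margY_nonneg _) (hKpos _ _ _).le
  have vanish (s : α × β) (hs : g s = 0) : P s = 0 :=
    le_antisymm ((le_margY hP.1 s).trans_eq
      ((mul_eq_zero.1 hs).resolve_right (hKpos _ _ _).ne')) (hP.1 s)
  have split_log (s : α × β) : P s * log (K (f s) s.2 s.1) + P s * log (margY P s.2 / P s) =
      P s * log (g s / P s) := by
    rcases (hP.1 s).eq_or_lt with hs | hs
    · simp [← hs]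
    · have := hs.trans_le (le_margY hP.1 s)
      rw [← mul_add, ← log_mul (hKpos _ _ _).ne' (by positivity), hg]
      congr 2
      ring
  have sum_g_le : ∑ s, g s ≤ Fintype.card κ :=
    calc ∑ s, g s ≤ ∑ s : α × β, ∑ k, margY P s.2 * K k s.2 s.1 :=
          sum_le_sum fun s _ => single_le_sum (f := fun k => margY P s.2 * K k s.2 s.1)
            (fun k _ => mul_nonneg (margY_nonneg _) (hKpos _ _ _).le) (mem_univ (f s))
      _ = ∑ k : κ, ∑ y, margY P y * ∑ x, K k y x := by
          rw [sum_comm]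
          exact sum_congr rfl fun k _ => by simp only [Fintype.sum_prod_type_right, mul_sum]
      _ = Fintype.card κ := by simp [(hK _ _).2, sum_margY, hP.2]
  have sum_g_pos : 0 < ∑ s, g s := by
    obtain ⟨s, -, hs⟩ := exists_ne_zero_of_sum_ne_zero (hP.2.trans_ne one_ne_zero)
    exact ((g_nonneg s).lt_of_ne' fun h => hs (vanish s h)).trans_le
      (single_le_sum (fun s _ => g_nonneg s) (mem_univ s))
  calc ∑ s, P s * log (K (f s) s.2 s.1) + condEnt P = ∑ s, P s * log (g s / P s) := by
        rw [condEnt, ← sum_add_distrib]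
        exact sum_congr rfl fun s _ => split_log s
    _ ≤ log (∑ s, g s) := hP.sum_mul_log_div_le g_nonneg vanish
    _ ≤ log (Fintype.card κ) := log_le_log sum_g_pos sum_g_le

end Gibbs

section BinarySymmetricChannel

variable {d : ℝ}

/-- The binary symmetric channel with crossover probability `d`. -/
def bsc (d : ℝ) (b a : Bool) : ℝ :=
  if a = b then 1 - d else d

theorem bsc_pos (hd0 : 0 < d) (hd1 : d < 1) (b a : Bool) : 0 < bsc d b a := by
  unfold bsc
  split_ifs <;> linarith

theorem isCondPmf_bsc (hd0 : 0 ≤ d) (hd1 : d ≤ 1) : IsCondPmf (bsc d) :=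
  fun b => ⟨fun a => by unfold bsc; split_ifs <;> linarith, by cases b <;> simp [bsc]⟩

theorem log_bsc (hd0 : 0 < d) (hd1 : d < 1) (b a : Bool) :
    log (bsc d b a) = -binEntropy d - log ((1 - d) / d) * (dHam a b - d) := by
  rw [binEntropy_eq_negMulLog_add_negMulLog_one_sub, negMulLog, negMulLog,
    log_div (sub_pos.2 hd1).ne' hd0.ne', bsc, dHam]
  split_ifs <;> ring

theorem sub_two_mul_sq_le_log_one_add {x : ℝ} (hx : |x| ≤ 1 / 2) :
    x - 2 * x ^ 2 ≤ log (1 + x) := by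
  have hlo := (abs_le.1 hx).1
  have h_pos : 0 < 1 + x := by linarith
  refine le_trans ?_ (one_sub_inv_le_log_of_pos h_pos)
  rw [← sub_nonneg, show 1 - (1 + x)⁻¹ - (x - 2 * x ^ 2) = x ^ 2 * (1 + 2 * x) / (1 + x) by
    field_simp; ring]
  exact div_nonneg (mul_nonneg (sq_nonneg x) (by linarith)) h_pos.le

theorem abs_dHam_sub_le_one {α : Type} (hd0 : 0 ≤ d) (hd1 : d ≤ 1) (a b : α) :
    |dHam a b - d| ≤ 1 := by
  unfold dHam
  rw [abs_le]
  split_ifs <;> constructor <;> linarith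

/-- The binary symmetric channel reweighted by `1 - t (δ - d)`, with `δ` the Hamming distortion.
The weight has mean `1`, so the result is again a channel. -/
def tiltedBsc (d t : ℝ) (b a : Bool) : ℝ :=
  bsc d b a * (1 - t * (dHam a b - d))

theorem abs_mul_dHam_sub_le {α : Type} {t τ : ℝ} (hd0 : 0 ≤ d) (hd1 : d ≤ 1) (ht : |t| ≤ τ)
    (a b : α) : |t * (dHam a b - d)| ≤ τ := by
  rw [abs_mul]
  exact (mul_le_of_le_one_right (abs_nonneg t) (abs_dHam_sub_le_one hd0 hd1 a b)).trans ht

theorem tiltedBsc_pos {t : ℝ} (hd0 : 0 < d) (hd1 : d < 1) (ht : |t| ≤ 1 / 2) (b a : Bool) :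
    0 < tiltedBsc d t b a :=
  mul_pos (bsc_pos hd0 hd1 b a)
    (by linarith [(abs_le.1 (abs_mul_dHam_sub_le hd0.le hd1.le ht a b)).2])

theorem sum_tiltedBsc (d t : ℝ) (b : Bool) : ∑ a, tiltedBsc d t b a = 1 := by
  cases b <;> simp [tiltedBsc, bsc, dHam] <;> ring

theorem le_log_tiltedBsc {t τ : ℝ} (hd0 : 0 < d) (hd1 : d < 1) (ht : |t| ≤ τ) (hτ : τ ≤ 1 / 2)
    (b a : Bool) :
    -binEntropy d - 2 * τ ^ 2 - (log ((1 - d) / d) + t) * (dHam a b - d) ≤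
      log (tiltedBsc d t b a) := by
  have tilt_le := abs_mul_dHam_sub_le hd0.le hd1.le ht a b
  have log_le := sub_two_mul_sq_le_log_one_add
    (x := -(t * (dHam a b - d))) (by rw [abs_neg]; exact tilt_le.trans hτ)
  have sq_le : (t * (dHam a b - d)) ^ 2 ≤ τ ^ 2 := by
    rw [← sq_abs]
    exact pow_le_pow_left₀ (abs_nonneg _) tilt_le 2
  have weight_pos : 0 < 1 - t * (dHam a b - d) := by linarith [(abs_le.1 tilt_le).2]
  rw [tiltedBsc, log_mul (bsc_pos hd0 hd1 b a).ne' weight_pos.ne', log_bsc hd0 hd1]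
  rw [neg_sq, ← sub_eq_add_neg] at log_le
  linarith

theorem le_log_prod_tiltedBsc {ι : Type} [Fintype ι] {t : ι → ℝ} {τ : ℝ} (hd0 : 0 < d)
    (hd1 : d < 1) (ht : ∀ i, |t i| ≤ τ) (hτ : τ ≤ 1 / 2) (b a : ι → Bool) :
    Fintype.card ι * (-binEntropy d - 2 * τ ^ 2) -
        log ((1 - d) / d) * ∑ i, (dHam (a i) (b i) - d) - ∑ i, t i * (dHam (a i) (b i) - d) ≤
      log (∏ i, tiltedBsc d (t i) (b i) (a i)) := by
  rw [log_prod fun i _ => (tiltedBsc_pos hd0 hd1 ((ht i).trans hτ) _ _).ne']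
  refine le_of_eq_of_le ?_ (sum_le_sum fun i _ => le_log_tiltedBsc hd0 hd1 (ht i) hτ (b i) (a i))
  simp only [add_mul, sum_sub_distrib (f := fun _ => _ - _), sum_add_distrib, ← mul_sum, sum_const,
    card_univ, nsmul_eq_mul]
  ring

end BinarySymmetricChannel

section Converse

theorem Delta2_eq_Delta1_swap {α β β' : Type} [Fintype α] [Fintype β] (q : α × β → ℝ)
    (δ : β → β' → ℝ) {n m : ℕ} (f : (Fin n → α) × (Fin n → β) → Fin m)
    (g : Fin m × (Fin n → α) → Fin n → β') :
    Delta2 q δ f g = Delta1 (swap q) δ (fun s => f s.swap) g :=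
  ((Equiv.prodComm (Fin n → β) (Fin n → α)).sum_comp fun s =>
    iid q n s * ((n : ℝ)⁻¹ * ∑ i, δ (s.2 i) (g (f s, s.1) i))).symm

theorem sum_iid_mul_sum_sub_eq_Delta1 {α β α' : Type} [Fintype α] [Fintype β] {q : α × β → ℝ}
    (hq : IsPmf q) (δ : α → α' → ℝ) {n m : ℕ} (hn : 0 < n)
    (f : (Fin n → α) × (Fin n → β) → Fin m) (g : Fin m × (Fin n → β) → Fin n → α') (d : ℝ) :
    ∑ s, iid q n s * ∑ i, (δ (s.1 i) (g (f s, s.2) i) - d) = n * (Delta1 q δ f g - d) := by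
  have hn' : (n : ℝ) ≠ 0 := by positivity
  simp only [sum_sub_distrib, mul_sub, sum_const, card_univ, Fintype.card_fin, nsmul_eq_mul]
  rw [(hq.iid n).sum_mul_const, Delta1, mul_sum]
  congr 1
  refine sum_congr rfl fun s _ => ?_
  rw [mul_left_comm, mul_inv_cancel_left₀ hn']

/-- With `θ = 0` this is the usual conditional rate-distortion bound. The free tilt `u` detects
any correlation between the reconstruction error and what the receiver knows. -/
theorem condEnt_sub_binEntropy_le_Delta1 {β : Type} [Fintype β] {q : Bool × β → ℝ} (hq : IsPmf q)
    {d θ ε : ℝ} (hd0 : 0 < d) (hd1 : d ≤ 1 / 2) (hθ0 : 0 ≤ θ) (hθ1 : θ ≤ 1 / 2) {n m : ℕ}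
    (hn : 0 < n) {f : (Fin n → Bool) × (Fin n → β) → Fin m}
    {g : Fin m × (Fin n → β) → Fin n → Bool} (hg : Delta1 q dHam f g ≤ d + ε)
    {u : Fin m × (Fin n → β) → Fin n → ℝ} (hu : ∀ k i, |u k i| ≤ 1) :
    n * (condEnt q - binEntropy d - 2 * θ ^ 2) ≤ log m + n * (log ((1 - d) / d) * ε) +
      θ * ∑ s, iid q n s * ∑ i, u (f s, s.2) i * (dHam (s.1 i) (g (f s, s.2) i) - d) := by
  have hd1' : d < 1 := by linarith
  have ht (k i) : |θ * u k i| ≤ θ := by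
    rw [abs_mul, abs_of_nonneg hθ0]
    exact mul_le_of_le_one_right hθ0 (hu k i)
  set K : Fin m → (Fin n → β) → (Fin n → Bool) → ℝ :=
    fun k y x => ∏ i, tiltedBsc d (θ * u (k, y) i) (g (k, y) i) (x i)
  have factor_pos (k y i) (a : Bool) : 0 < tiltedBsc d (θ * u (k, y) i) (g (k, y) i) a :=
    tiltedBsc_pos hd0 hd1' ((ht _ i).trans hθ1) _ a
  have rate := sum_mul_log_add_condEnt_le_log_card (hq.iid n) f (K := K)
    (fun k y => IsPmf.pi fun i => ⟨fun a => (factor_pos k y i a).le, sum_tiltedBsc _ _ _⟩)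
    fun k y x => prod_pos fun i _ => factor_pos k y i (x i)
  set D : (Fin n → Bool) × (Fin n → β) → ℝ := fun s => ∑ i, (dHam (s.1 i) (g (f s, s.2) i) - d)
  set U : (Fin n → Bool) × (Fin n → β) → ℝ :=
    fun s => ∑ i, u (f s, s.2) i * (dHam (s.1 i) (g (f s, s.2) i) - d)
  set slope := log ((1 - d) / d)
  have log_K : n * (-binEntropy d - 2 * θ ^ 2) - slope * ∑ s, iid q n s * D s -
      θ * ∑ s, iid q n s * U s ≤ ∑ s, iid q n s * log (K (f s) s.2 s.1) :=
    calc _ = ∑ s, iid q n s * (n * (-binEntropy d - 2 * θ ^ 2) - slope * D s - θ * U s) := by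
          simp only [mul_sub (iid q n _), sum_sub_distrib, (hq.iid n).sum_mul_const, mul_sum,
            mul_left_comm slope, mul_left_comm θ]
      _ ≤ _ := sum_le_sum fun s _ => mul_le_mul_of_nonneg_left
          (by simpa only [Fintype.card_fin, mul_assoc θ, ← mul_sum] using
            le_log_prod_tiltedBsc hd0 hd1' (ht (f s, s.2)) hθ1 _ s.1)
          ((hq.iid n).1 s)
  have distortion : slope * ∑ s, iid q n s * D s ≤ n * (slope * ε) := by
    rw [sum_iid_mul_sum_sub_eq_Delta1 hq dHam hn, mul_left_comm]
    gcongr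
    · exact log_nonneg ((one_le_div hd0).2 (by linarith))
    · linarith
  rw [condEnt_iid hq, Fintype.card_fin] at rate
  linarith

theorem condEnt_sub_binEntropy_le_Delta2 {α : Type} [Fintype α] {q : α × Bool → ℝ}
    (hq : IsPmf (swap q)) {d θ ε : ℝ} (hd0 : 0 < d) (hd1 : d ≤ 1 / 2) (hθ0 : 0 ≤ θ)
    (hθ1 : θ ≤ 1 / 2) {n m : ℕ} (hn : 0 < n) {f : (Fin n → α) × (Fin n → Bool) → Fin m}
    {g : Fin m × (Fin n → α) → Fin n → Bool} (hg : Delta2 q dHam f g ≤ d + ε)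
    {u : Fin m × (Fin n → α) → Fin n → ℝ} (hu : ∀ k i, |u k i| ≤ 1) :
    n * (condEnt (swap q) - binEntropy d - 2 * θ ^ 2) ≤ log m + n * (log ((1 - d) / d) * ε) +
      θ * ∑ s, iid q n s * ∑ i, u (f s, s.1) i * (dHam (s.2 i) (g (f s, s.1) i) - d) := by
  rw [Delta2_eq_Delta1_swap] at hg
  refine (condEnt_sub_binEntropy_le_Delta1 hq hd0 hd1 hθ0 hθ1 hn hg hu).trans_eq ?_
  congr 2
  exact (Equiv.prodComm (Fin n → Bool) (Fin n → α)).sum_comp fun s =>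
    iid q n s * ∑ i, u (f s, s.1) i * (dHam (s.2 i) (g (f s, s.1) i) - d)

end Converse

section DoublySymmetricSource

variable {ρ : ℝ}

theorem sum_dsbs_mul (ρ : ℝ) (z : Bool × Bool → ℝ) :
    ∑ s, dsbs ρ s * z s = (1 - ρ) / 2 * (z (false, false) + z (true, true)) +
      ρ / 2 * (z (false, true) + z (true, false)) := by
  simp only [dsbs, Fintype.sum_prod_type, Fintype.sum_bool, reduceCtorEq, if_true, if_false]
  ring

theorem sum_dsbs_mul_ite (ρ u v : ℝ) :
    ∑ s, dsbs ρ s * (if s.1 = s.2 then u else v) = (1 - ρ) * u + ρ * v := by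
  simp only [sum_dsbs_mul, reduceCtorEq, if_true, if_false]
  ring

theorem isPmf_dsbs (hρ0 : 0 ≤ ρ) (hρ1 : ρ ≤ 1) : IsPmf (dsbs ρ) :=
  ⟨fun s => by unfold dsbs; split_ifs <;> linarith, by
    simpa using (sum_dsbs_mul ρ fun _ => 1).trans (by ring)⟩

theorem swap_dsbs (ρ : ℝ) : swap (dsbs ρ) = dsbs ρ := by
  funext s
  simp only [swap, dsbs, eq_comm]

theorem condEnt_dsbs (ρ : ℝ) : condEnt (dsbs ρ) = binEntropy ρ := by
  have margY_eq (b : Bool) : margY (dsbs ρ) b = 1 / 2 := by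
    cases b <;> simp [margY, dsbs] <;> ring
  have half_div (c : ℝ) : 1 / 2 / (c / 2) = c⁻¹ := by
    rw [div_div_div_cancel_right₀ two_ne_zero, one_div]
  rw [condEnt, sum_dsbs_mul, binEntropy]
  simp only [margY_eq, dsbs, reduceCtorEq, if_true, if_false, half_div]
  ring

/-- The product `(-1)^a (-1)^b` of two bits seen as signs. -/
def agree (a b : Bool) : ℝ :=
  if a = b then 1 else -1

theorem abs_agree (a b : Bool) : |agree a b| = 1 := by
  unfold agree
  split_ifs <;> simp

theorem sum_dsbs_mul_agree (ρ : ℝ) : ∑ s, dsbs ρ s * agree s.1 s.2 = 1 - 2 * ρ := by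
  simp only [agree, sum_dsbs_mul_ite]
  ring

variable {d : ℝ}

theorem agree_mul_dHam_sub_add (d : ℝ) (x y a b : Bool) :
    agree y b * agree a b * (dHam x a - d) + (1 - 2 * d) * (agree a b * (dHam y b - d)) =
      ((1 - 2 * d) ^ 2 * agree a b - agree x y) / 2 := by
  cases x <;> cases y <;> cases a <;> cases b <;> simp [agree, dHam] <;> ring

/-- The tilts of the two receivers, for source pair `(x, y)`, reconstructions `(a, b)` and the
estimates `a'`, `b'` of these formed by the opposite receivers. -/
theorem tilted_error_le (hd0 : 0 ≤ d) (hd1 : d ≤ 1 / 2) (x y a a' b b' : Bool) :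
    agree y b' * agree a b' * (dHam x a - d) + (1 - 2 * d) * (agree a' b * (dHam y b - d)) ≤
      ((1 - 2 * d) ^ 2 - agree x y) / 2 + if a' = a ∧ b' = b then 0 else 5 / 2 := by
  split_ifs with h
  · rw [h.1, h.2, agree_mul_dHam_sub_add, add_zero]
    have := mul_le_of_le_one_right (sq_nonneg (1 - 2 * d))
      ((le_abs_self _).trans_eq (abs_agree a b))
    linarith
  · have agree_le := (le_abs_self _).trans_eq (abs_agree x y)
    have error_one := abs_mul_dHam_sub_le (τ := 1) hd0 (by linarith)
      (t := agree y b' * agree a b') (by simp [abs_mul, abs_agree]) x a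
    have error_two := abs_mul_dHam_sub_le hd0 (by linarith) (abs_agree a' b).le y b
    nlinarith [(abs_le.1 error_one).2, (abs_le.1 error_two).2, sq_nonneg (1 - 2 * d)]

theorem sum_tilted_error_le {n : ℕ} (hd0 : 0 ≤ d) (hd1 : d ≤ 1 / 2)
    (x y a a' b b' : Fin n → Bool) :
    ∑ i, agree (y i) (b' i) * agree (a i) (b' i) * (dHam (x i) (a i) - d) +
        (1 - 2 * d) * ∑ i, agree (a' i) (b i) * (dHam (y i) (b i) - d) ≤
      ∑ i, ((1 - 2 * d) ^ 2 - agree (x i) (y i)) / 2 +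
        n * (5 / 2 * ((if a' = a then 0 else 1) + if b' = b then 0 else 1)) := by
  have letterwise (i : Fin n) : (if a' i = a i ∧ b' i = b i then (0 : ℝ) else 5 / 2) ≤
      5 / 2 * ((if a' = a then 0 else 1) + if b' = b then 0 else 1) := by
    by_cases ha : a' = a <;> by_cases hb : b' = b <;> simp only [ha, hb] <;>
      split_ifs <;> norm_num at *
  rw [mul_sum, ← sum_add_distrib]
  refine (sum_le_sum fun i _ => (tilted_error_le hd0 hd1 (x i) (y i) _ _ _ _).trans
    (add_le_add_right (letterwise i) _)).trans_eq ?_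
  rw [sum_add_distrib, sum_const, card_univ, Fintype.card_fin, nsmul_eq_mul]

theorem sum_iid_dsbs_tilted_error_le (hρ0 : 0 ≤ ρ) (hρ1 : ρ ≤ 1) (hd0 : 0 ≤ d) (hd1 : d ≤ 1 / 2)
    {n : ℕ} {ε : ℝ} {a a' b b' : (Fin n → Bool) × (Fin n → Bool) → Fin n → Bool}
    (ha : ∑ s, (if a' s = a s then 0 else iid (dsbs ρ) n s) ≤ ε)
    (hb : ∑ s, (if b' s = b s then 0 else iid (dsbs ρ) n s) ≤ ε) :
    ∑ s, iid (dsbs ρ) n s *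
          ∑ i, agree (s.2 i) (b' s i) * agree (a s i) (b' s i) * (dHam (s.1 i) (a s i) - d) +
        (1 - 2 * d) * ∑ s, iid (dsbs ρ) n s *
          ∑ i, agree (a' s i) (b s i) * (dHam (s.2 i) (b s i) - d) ≤
      n * (((1 - 2 * d) ^ 2 - (1 - 2 * ρ)) / 2 + 5 * ε) := by
  have hq := isPmf_dsbs hρ0 hρ1
  have mean_agree : ∑ s, iid (dsbs ρ) n s * ∑ i, ((1 - 2 * d) ^ 2 - agree (s.1 i) (s.2 i)) / 2 =
      n * (((1 - 2 * d) ^ 2 - (1 - 2 * ρ)) / 2) := by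
    rw [hq.sum_iid_mul_sum n fun t => ((1 - 2 * d) ^ 2 - agree t.1 t.2) / 2]
    simp only [mul_div_assoc', mul_sub, sum_sub_distrib, ← sum_div, hq.sum_mul_const,
      sum_dsbs_mul_agree]
  rw [mul_sum, ← sum_add_distrib]
  calc _ ≤ ∑ s, (iid (dsbs ρ) n s * ∑ i, ((1 - 2 * d) ^ 2 - agree (s.1 i) (s.2 i)) / 2 +
          n * (5 / 2) * ((if a' s = a s then 0 else iid (dsbs ρ) n s) +
            if b' s = b s then 0 else iid (dsbs ρ) n s)) := sum_le_sum fun s _ => by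
        have := mul_le_mul_of_nonneg_left
          (sum_tilted_error_le hd0 hd1 s.1 s.2 (a s) (a' s) (b s) (b' s)) ((hq.iid n).1 s)
        refine le_of_eq_of_le (by ring) (this.trans_eq ?_)
        split_ifs <;> ring
    _ = n * (((1 - 2 * d) ^ 2 - (1 - 2 * ρ)) / 2) + n * (5 / 2) *
          (∑ s, (if a' s = a s then 0 else iid (dsbs ρ) n s) +
            ∑ s, if b' s = b s then 0 else iid (dsbs ρ) n s) := by
        rw [sum_add_distrib, mean_agree, ← mul_sum, sum_add_distrib]
    _ ≤ n * (((1 - 2 * d) ^ 2 - (1 - 2 * ρ)) / 2) + n * (5 / 2) * (ε + ε) := by gcongr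
    _ = _ := by ring

theorem dsbs_code_rate_lower_bound (hρ0 : 0 ≤ ρ) (hρ1 : ρ ≤ 1) (hd0 : 0 < d) (hd1 : d ≤ 1 / 2)
    (hγ : (1 - 2 * d) ^ 2 ≤ 1 - 2 * ρ) {θ ε : ℝ} (hθ0 : 0 ≤ θ) (hθ1 : θ ≤ 1 / 2) (hε : 0 ≤ ε)
    {n m : ℕ} (hn : 0 < n) {f : (Fin n → Bool) × (Fin n → Bool) → Fin m}
    {g₁ g₂ φ₁ φ₂ : Fin m × (Fin n → Bool) → Fin n → Bool}
    (h₁ : Delta1 (dsbs ρ) dHam f g₁ ≤ d + ε) (h₂ : Delta2 (dsbs ρ) dHam f g₂ ≤ d + ε)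
    (hφ₂ : ∑ s, (if φ₂ (f s, s.1) = g₁ (f s, s.2) then 0 else iid (dsbs ρ) n s) ≤ ε)
    (hφ₁ : ∑ s, (if φ₁ (f s, s.2) = g₂ (f s, s.1) then 0 else iid (dsbs ρ) n s) ≤ ε) :
    binEntropy ρ - binEntropy d + θ * (1 - 2 * ρ - (1 - 2 * d) ^ 2) / 4 - 2 * θ ^ 2 ≤
      log m / n + (log ((1 - d) / d) + 5 * θ) * ε := by
  have hq := isPmf_dsbs hρ0 hρ1
  have receiver_one := condEnt_sub_binEntropy_le_Delta1 hq hd0 hd1 hθ0 hθ1 hn h₁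
    (u := fun k i => agree (k.2 i) (φ₁ k i) * agree (g₁ k i) (φ₁ k i))
    fun k i => by simp only [abs_mul, abs_agree, mul_one, le_refl]
  have receiver_two := condEnt_sub_binEntropy_le_Delta2 ((swap_dsbs ρ).symm ▸ hq) hd0 hd1 hθ0 hθ1
    hn h₂ (u := fun k i => agree (φ₂ k i) (g₂ k i)) fun k i => (abs_agree _ _).le
  rw [condEnt_dsbs] at receiver_one
  rw [swap_dsbs, condEnt_dsbs] at receiver_two
  have errors := mul_le_mul_of_nonneg_left
    (sum_iid_dsbs_tilted_error_le hρ0 hρ1 hd0.le hd1 hφ₂ hφ₁) hθ0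
  have weighted := add_le_add receiver_one
    (mul_le_mul_of_nonneg_left receiver_two (show 0 ≤ 1 - 2 * d by linarith))
  have hn' : (0 : ℝ) < n := Nat.cast_pos.2 hn
  have rescale : log m = n * (log m / n) := (mul_div_cancel₀ _ hn'.ne').symm
  rw [rescale] at weighted
  have summed : 2 * (1 - d) * (binEntropy ρ - binEntropy d - 2 * θ ^ 2) ≤
      2 * (1 - d) * (log m / n + log ((1 - d) / d) * ε) +
        θ * (((1 - 2 * d) ^ 2 - (1 - 2 * ρ)) / 2 + 5 * ε) :=
    le_of_mul_le_mul_left (by linarith) hn'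
  have gain := mul_le_mul_of_nonneg_left (show 2 * (1 - d) ≤ 2 by linarith)
    (mul_nonneg hθ0 (sub_nonneg.2 hγ))
  have loss := mul_le_mul_of_nonneg_left (show 1 ≤ 2 * (1 - d) by linarith)
    (mul_nonneg hθ0 hε)
  exact le_of_mul_le_mul_left (by linarith) (show 0 < 2 * (1 - d) by linarith)

theorem CRAchievable.dsbs_rate_lower_bound (hρ0 : 0 ≤ ρ) (hρ1 : ρ ≤ 1) (hd0 : 0 < d)
    (hd1 : d ≤ 1 / 2) (hγ : (1 - 2 * d) ^ 2 ≤ 1 - 2 * ρ) {r : ℝ}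
    (hr : CRAchievable (dsbs ρ) dHam dHam d d r) :
    binEntropy ρ - binEntropy d + (1 - 2 * ρ - (1 - 2 * d) ^ 2) ^ 2 / 128 ≤ r * log 2 := by
  set γ := 1 - 2 * ρ - (1 - 2 * d) ^ 2
  have : 0 ≤ γ := sub_nonneg.2 hγ
  have hγ1 : γ ≤ 1 := by linarith [sq_nonneg (1 - 2 * d)]
  have hlog2 : 0 < log 2 := log_pos one_lt_two
  have slope_nonneg : 0 ≤ log ((1 - d) / d) := log_nonneg ((one_le_div hd0).2 (by linarith))
  set C := log 2 + log ((1 - d) / d) + 5 * (γ / 16)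
  have hC : 0 < C := by positivity
  refine le_of_forall_pos_le_add fun ε hε => ?_
  obtain ⟨n, m, f, g₁, g₂, φ₁, φ₂, hn, hrate, h₁, h₂, hφ₂, hφ₁⟩ := hr (ε / C) (by positivity)
  rw [logb, div_right_comm, div_le_iff₀ hlog2] at hrate
  have bound : binEntropy ρ - binEntropy d + γ / 16 * γ / 4 - 2 * (γ / 16) ^ 2 ≤
      log m / n + (log ((1 - d) / d) + 5 * (γ / 16)) * (ε / C) :=
    dsbs_code_rate_lower_bound hρ0 hρ1 hd0 hd1 hγ (by linarith) (by linarith) (by positivity)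
      hn h₁ h₂ (by convert hφ₂) (by convert hφ₁)
  have C_mul : (log 2 + log ((1 - d) / d) + 5 * (γ / 16)) * (ε / C) = ε := mul_div_cancel₀ _ hC.ne'
  linarith

end DoublySymmetricSource

section RandomCoding

theorem IsPmf.exists_le_of_sum_mul_le {α : Type} [Fintype α] {p F : α → ℝ} {A : ℝ} (hp : IsPmf p)
    (h : ∑ a, p a * F a ≤ A) : ∃ a, F a ≤ A := by
  by_contra! hF
  obtain ⟨a, ha, hpa⟩ := exists_ne_zero_of_sum_ne_zero (hp.2.trans_ne one_ne_zero)
  refine h.not_gt ((hp.sum_mul_const A).symm.trans_lt (sum_lt_sum (fun b _ => ?_) ⟨a, ha, ?_⟩))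
  · exact mul_le_mul_of_nonneg_left (hF b).le (hp.1 b)
  · exact mul_lt_mul_of_pos_left (hF a) ((hp.1 a).lt_of_ne' hpa)

theorem sum_union_le {S : Type} [DecidableEq S] {P : S → ℝ} (hP : ∀ s, 0 ≤ P s) (A B : Finset S) :
    ∑ s ∈ A ∪ B, P s ≤ ∑ s ∈ A, P s + ∑ s ∈ B, P s :=
  (le_add_of_nonneg_right (sum_nonneg fun s _ => hP s)).trans_eq (sum_union_inter (s₁ := A))

variable {S V : Type} [Fintype S] [Fintype V]

theorem exists_codebook_le {Q : V → ℝ} (hQ : IsPmf Q) (P : S → ℝ) (a b : S → V → ℝ) (L : ℕ) :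
    ∃ c : Fin L → V, ∑ s, P s * (∏ ℓ, a s (c ℓ) + ∑ ℓ, b s (c ℓ)) ≤
      ∑ s, P s * ((∑ w, Q w * a s w) ^ L + L * ∑ w, Q w * b s w) := by
  refine (IsPmf.pi fun _ : Fin L => hQ).exists_le_of_sum_mul_le (le_of_eq ?_)
  simp only [mul_sum univ (fun s => P s * _), mul_left_comm _ (P _)]
  rw [sum_comm]
  refine sum_congr rfl fun s _ => ?_
  have prod_law := IsPmf.sum_pi_mul_prod (fun _ : Fin L => hQ) univ fun _ => a s
  have sum_law := IsPmf.sum_pi_mul_sum (fun _ : Fin L => hQ) fun _ => b s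
  rw [prod_const, card_univ, Fintype.card_fin] at prod_law
  rw [sum_const, card_univ, Fintype.card_fin, nsmul_eq_mul] at sum_law
  rw [← prod_law, ← sum_law, ← sum_add_distrib, mul_sum]
  simp only [mul_add]

theorem isPmf_uniform {m : ℕ} (hm : 0 < m) : IsPmf fun _ : Fin m => (m : ℝ)⁻¹ :=
  ⟨fun _ => by positivity, by simp [hm.ne']⟩

theorem sum_uniform_pi_collision {U : Type} [Fintype U] [DecidableEq U] {m : ℕ} (hm : 0 < m)
    {u v : U} (huv : u ≠ v) :
    ∑ M : U → Fin m, (∏ _j : U, (m : ℝ)⁻¹) * (if M u = M v then 1 else 0) = (m : ℝ)⁻¹ := by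
  have indicator (M : U → Fin m) : (if M u = M v then (1 : ℝ) else 0) =
      ∑ k, ∏ j ∈ {u, v}, if M j = k then 1 else 0 := by
    simp [prod_pair huv, eq_comm]
  have hit_twice (k : Fin m) : ∑ M : U → Fin m,
      (∏ _j : U, (m : ℝ)⁻¹) * ∏ j ∈ {u, v}, (if M j = k then 1 else 0) = (m : ℝ)⁻¹ * (m : ℝ)⁻¹ := by
    refine (IsPmf.sum_pi_mul_prod (fun _ : U => isPmf_uniform hm) {u, v}
      fun _ b => if b = k then 1 else 0).trans ?_
    simp [prod_pair huv]
  simp only [indicator, mul_sum]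
  rw [sum_comm, sum_congr rfl fun k _ => hit_twice k]
  simp [hm.ne']

theorem sum_filter_le_sum_mul {P z : S → ℝ} (hP : ∀ s, 0 ≤ P s) (hz : ∀ s, 0 ≤ z s)
    {A : S → Prop} [DecidablePred A] (h : ∀ s, A s → 1 ≤ z s) :
    ∑ s with A s, P s ≤ ∑ s, P s * z s := by
  rw [sum_filter]
  refine sum_le_sum fun s _ => ?_
  split_ifs with hs
  · exact le_mul_of_one_le_right (hP s) (h s hs)
  · exact mul_nonneg (hP s) (hz s)

theorem exists_binning {U : Type} [Finite U] {P : S → ℝ} (hP : ∀ s, 0 ≤ P s) (e : S → U)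
    (C : S → Finset U) {m : ℕ} (hm : 0 < m) :
    ∃ (M : U → Fin m) (confused : Finset S), ∑ s ∈ confused, P s ≤ ∑ s, P s * (#(C s) / m) ∧
      ∀ s ∉ confused, ∀ u ∈ C s, M u = M (e s) → u = e s := by
  have := Fintype.ofFinite U
  have mean_collisions : ∑ M : U → Fin m, (∏ _j : U, (m : ℝ)⁻¹) *
      ∑ s, P s * ∑ u ∈ (C s).erase (e s), (if M u = M (e s) then 1 else 0) ≤
      ∑ s, P s * (#(C s) / m) := by
    simp only [mul_sum univ (fun s => P s * _), mul_left_comm _ (P _)]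
    rw [sum_comm]
    refine sum_le_sum fun s _ => ?_
    rw [← mul_sum]
    refine mul_le_mul_of_nonneg_left ?_ (hP s)
    simp only [mul_sum ((C s).erase (e s))]
    rw [sum_comm, sum_congr rfl fun u hu => sum_uniform_pi_collision hm (ne_of_mem_erase hu),
      sum_const, nsmul_eq_mul, div_eq_mul_inv]
    gcongr
    exact erase_subset _ _
  obtain ⟨M, hM⟩ := (IsPmf.pi fun _ : U => isPmf_uniform hm).exists_le_of_sum_mul_le mean_collisions
  have indicator_nonneg (s : S) (u : U) : (0 : ℝ) ≤ if M u = M (e s) then 1 else 0 := by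
    split_ifs <;> norm_num
  refine ⟨M, ({s | ∃ u ∈ (C s).erase (e s), M u = M (e s)} : Finset S),
    (sum_filter_le_sum_mul hP (fun s => sum_nonneg fun u _ => indicator_nonneg s u)
      fun s ⟨u, hu, hMu⟩ => ?_).trans hM, fun s hs u hu hMu => ?_⟩
  · by_contra hne
    exact hs (mem_filter.2 ⟨mem_univ s, u, mem_erase.2 ⟨hne, hu⟩, hMu⟩)
  · exact (if_pos hMu).symm.le.trans
      (single_le_sum (f := fun u => if M u = M (e s) then (1 : ℝ) else 0)
        (fun u _ => indicator_nonneg s u) hu)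

theorem one_sub_mul_pow_le {x y : ℝ} (hx0 : 0 ≤ x) (hx1 : x ≤ 1) (hxy : x * y ≤ 1) (n : ℕ) :
    (1 - x * y) ^ n ≤ 1 - x + exp (-(n * y)) := by
  have convex := convexOn_exp.2 (Set.mem_univ 0) (Set.mem_univ (-(n * y)))
    (sub_nonneg.2 hx1) hx0 (sub_add_cancel 1 x)
  simp only [smul_eq_mul, mul_zero, zero_add, exp_zero, mul_one] at convex
  calc (1 - x * y) ^ n ≤ exp (-(x * y)) ^ n :=
        pow_le_pow_left₀ (sub_nonneg.2 hxy) (one_sub_le_exp_neg _) n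
    _ = exp (x * -(n * y)) := by rw [← exp_nat_mul]; ring_nf
    _ ≤ 1 - x + x * exp (-(n * y)) := convex
    _ ≤ 1 - x + exp (-(n * y)) := by
      gcongr
      exact mul_le_of_le_one_left (exp_pos _).le hx1

theorem pow_sum_compl_le [DecidableEq V] {Q W : V → ℝ} (hQ : IsPmf Q) (hW : IsPmf W) {A : ℝ}
    (hA : 0 < A) {T : Finset V} (hT : ∀ w ∈ T, W w ≤ A * Q w) (L : ℕ) :
    (∑ w ∈ Tᶜ, Q w) ^ L ≤ ∑ w ∈ Tᶜ, W w + exp (-(L / A)) := by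
  have Q_split := sum_add_sum_compl T Q
  have W_split := sum_add_sum_compl T W
  rw [hQ.2] at Q_split
  rw [hW.2] at W_split
  have W_le : (∑ w ∈ T, W w) * A⁻¹ ≤ ∑ w ∈ T, Q w := by
    rw [← div_eq_mul_inv, div_le_iff₀' hA, mul_sum]
    exact sum_le_sum hT
  have Q_compl_nonneg : 0 ≤ ∑ w ∈ Tᶜ, Q w := sum_nonneg fun w _ => hQ.1 w
  have W_compl_nonneg : 0 ≤ ∑ w ∈ Tᶜ, W w := sum_nonneg fun w _ => hW.1 w
  calc (∑ w ∈ Tᶜ, Q w) ^ L ≤ (1 - (∑ w ∈ T, W w) * A⁻¹) ^ L :=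
        pow_le_pow_left₀ Q_compl_nonneg (by linarith) L
    _ ≤ 1 - ∑ w ∈ T, W w + exp (-(L * A⁻¹)) :=
        one_sub_mul_pow_le (sum_nonneg fun w _ => hW.1 w) (by linarith) (by linarith) L
    _ = ∑ w ∈ Tᶜ, W w + exp (-(L / A)) := by rw [div_eq_mul_inv, ← W_split]; ring

theorem exists_codebook [DecidableEq V] {P : S → ℝ} (hP : IsPmf P) {W : S → V → ℝ}
    (hW : IsCondPmf W) {Q : V → ℝ} (hQ : IsPmf Q) {A B : ℝ} (hA : 0 < A) {T D : S → Finset V}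
    (hT : ∀ s, ∀ w ∈ T s, W s w ≤ A * Q w) (hD : ∀ s, ∑ w ∈ D s, Q w ≤ B) (L m : ℕ) :
    ∃ (c : Fin L → V) (uncovered : Finset S),
      ∑ s ∈ uncovered, P s + ∑ s, P s * (#{ℓ | c ℓ ∈ D s} / m) ≤
        ∑ s, P s * ∑ w ∈ (T s)ᶜ, W s w + exp (-(L / A)) + L * B / m ∧
      ∀ s ∉ uncovered, ∃ ℓ, c ℓ ∈ T s := by
  obtain ⟨c, hc⟩ := exists_codebook_le hQ P (fun s w => if w ∈ T s then 0 else 1)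
    (fun s w => (if w ∈ D s then 1 else 0) / m) L
  refine ⟨c, ({s | ∀ ℓ, c ℓ ∉ T s} : Finset S), ?_, fun s hs => by simpa using hs⟩
  have uncovered_le : ∑ s with ∀ ℓ, c ℓ ∉ T s, P s ≤
      ∑ s, P s * ∏ ℓ, if c ℓ ∈ T s then (0 : ℝ) else 1 :=
    sum_filter_le_sum_mul hP.1 (fun s => prod_nonneg fun ℓ _ => by split_ifs <;> norm_num)
      fun s hs => by simp [hs]
  have count (s : S) : (#{ℓ | c ℓ ∈ D s} / m : ℝ) =
      ∑ ℓ, (if c ℓ ∈ D s then (1 : ℝ) else 0) / m := by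
    rw [← sum_div, sum_boole]
  have mean_le (s : S) : (∑ w, Q w * if w ∈ T s then (0 : ℝ) else 1) ^ L +
      L * ∑ w, Q w * ((if w ∈ D s then 1 else 0) / m) ≤
      ∑ w ∈ (T s)ᶜ, W s w + (exp (-(L / A)) + L * B / m) := by
    have Q_compl : ∑ w, Q w * (if w ∈ T s then (0 : ℝ) else 1) = ∑ w ∈ (T s)ᶜ, Q w := by
      rw [← Fintype.sum_ite_mem (T s)ᶜ Q]
      simp
    have Q_D : ∑ w, Q w * ((if w ∈ D s then (1 : ℝ) else 0) / m) = (∑ w ∈ D s, Q w) / m := by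
      simp [← mul_div_assoc, ← sum_div]
    have := pow_sum_compl_le hQ (hW s) hA (hT s) L
    rw [Q_compl, Q_D, ← mul_div_assoc, ← add_assoc]
    gcongr
    exact hD s
  calc _ ≤ ∑ s, P s * (∏ ℓ, (if c ℓ ∈ T s then (0 : ℝ) else 1) +
        ∑ ℓ, (if c ℓ ∈ D s then (1 : ℝ) else 0) / m) := by
        simp only [mul_add, sum_add_distrib, count]
        gcongr
    _ ≤ _ := hc
    _ ≤ ∑ s, P s * (∑ w ∈ (T s)ᶜ, W s w + (exp (-(L / A)) + L * B / m)) :=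
        sum_le_sum fun s _ => mul_le_mul_of_nonneg_left (mean_le s) (hP.1 s)
    _ = _ := by
        simp only [mul_add (P _), sum_add_distrib, hP.sum_mul_const, add_assoc]

/-- The message announces a bin of codewords, and the decoder looks for the only plausible codeword
in that bin: `T s` are the codewords that describe `s` well, `D s` the plausible ones. -/
theorem exists_binned_codebook [DecidableEq V] {P : S → ℝ} (hP : IsPmf P) {W : S → V → ℝ}
    (hW : IsCondPmf W) {Q : V → ℝ} (hQ : IsPmf Q) {A B : ℝ} (hA : 0 < A) {T D : S → Finset V}
    (hT : ∀ s, ∀ w ∈ T s, W s w ≤ A * Q w) (hD : ∀ s, ∑ w ∈ D s, Q w ≤ B) {L m : ℕ}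
    (hL : 0 < L) (hm : 0 < m) :
    ∃ (bin : Fin m → Finset V) (f : S → Fin m) (bad : Finset S),
      ∑ s ∈ bad, P s ≤ ∑ s, P s * ∑ w ∈ (T s)ᶜ, W s w + exp (-(L / A)) + L * B / m ∧
      ∀ s ∉ bad, ∃ w ∈ bin (f s), w ∈ T s ∧ ∀ w' ∈ bin (f s), w' ∈ D s → w' = w := by
  obtain ⟨c, uncovered, hc, covered⟩ := exists_codebook hP hW hQ hA hT hD L m
  have encoder (s : S) : ∃ ℓ, s ∉ uncovered → c ℓ ∈ T s := by
    by_cases hs : s ∈ uncovered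
    · exact ⟨⟨0, hL⟩, fun h => absurd hs h⟩
    · exact (covered s hs).imp fun _ hℓ _ => hℓ
  choose e he using encoder
  obtain ⟨M, confused, hM, unconfused⟩ := exists_binning hP.1 e (fun s => {ℓ | c ℓ ∈ D s}) hm
  refine ⟨fun k => image c {ℓ | M ℓ = k}, fun s => M (e s), uncovered ∪ confused, ?_,
    fun s hs => ?_⟩
  · linarith [sum_union_le hP.1 uncovered confused]
  · obtain ⟨hs_covered, hs_unconfused⟩ := not_or.1 (mem_union.not.1 hs)
    refine ⟨c (e s), mem_image_of_mem c (by simp), he s hs_covered, fun w' hw' hD' => ?_⟩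
    obtain ⟨ℓ, hMℓ, rfl⟩ := mem_image.1 hw'
    rw [unconfused s hs_unconfused ℓ (by simpa using hD') (mem_filter.1 hMℓ).2]

end RandomCoding

section TwoReceivers

variable {α β V : Type}

theorem exists_decoder [Nonempty V] {K : Type} (bin : K → Finset V) (D : β → Finset V) :
    ∃ g : K × β → V, ∀ k b, ∀ w ∈ bin k, w ∈ D b → (∀ w' ∈ bin k, w' ∈ D b → w' = w) →
      g (k, b) = w := by
  have choice (kb : K × β) : ∃ v, (∃ w ∈ bin kb.1, w ∈ D kb.2) → v ∈ bin kb.1 ∧ v ∈ D kb.2 := by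
    by_cases h : ∃ w ∈ bin kb.1, w ∈ D kb.2
    · exact h.imp fun _ hv _ => hv
    · exact ⟨Classical.arbitrary V, fun h' => absurd h' h⟩
  choose g hg using choice
  refine ⟨g, fun k b w hw hwD unique => ?_⟩
  obtain ⟨hbin, hD⟩ := hg (k, b) ⟨w, hw, hwD⟩
  exact unique _ hbin hD

variable [Fintype V]

theorem sum_filter_le_mul_le {Q Q' : V → ℝ} (hQ' : IsPmf Q') {B : ℝ} (hB : 0 ≤ B) :
    ∑ w with Q w ≤ B * Q' w, Q w ≤ B :=
  calc ∑ w with Q w ≤ B * Q' w, Q w ≤ ∑ w with Q w ≤ B * Q' w, B * Q' w :=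
        sum_le_sum fun _ hw => (mem_filter.1 hw).2
    _ ≤ ∑ w, B * Q' w :=
        sum_le_univ_sum_of_nonneg fun w => mul_nonneg hB (hQ'.1 w)
    _ = B := by rw [← mul_sum, hQ'.2, mul_one]

theorem exists_binned_code [DecidableEq V] [Fintype α] [Fintype β] {P : α × β → ℝ}
    (hP : IsPmf P) {W : α × β → V → ℝ} (hW : IsCondPmf W)
    {Q : V → ℝ} (hQ : IsPmf Q) {V₁ : β → V → ℝ} (hV₁ : IsCondPmf V₁) {V₂ : α → V → ℝ}
    (hV₂ : IsCondPmf V₂) {A B : ℝ} (hA : 0 < A) (hB : 0 ≤ B) {T : α × β → Finset V}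
    (hT : ∀ s, ∀ w ∈ T s, W s w ≤ A * Q w) (hT₁ : ∀ s, ∀ w ∈ T s, Q w ≤ B * V₁ s.2 w)
    (hT₂ : ∀ s, ∀ w ∈ T s, Q w ≤ B * V₂ s.1 w) {L m : ℕ} (hL : 0 < L) (hm : 0 < m) :
    ∃ (f : α × β → Fin m) (g₁ : Fin m × β → V) (g₂ : Fin m × α → V) (bad : Finset (α × β)),
      ∑ s ∈ bad, P s ≤
        ∑ s, P s * ∑ w ∈ (T s)ᶜ, W s w + exp (-(L / A)) + L * (2 * B) / m ∧
      ∀ s ∉ bad, g₁ (f s, s.2) ∈ T s ∧ g₂ (f s, s.1) = g₁ (f s, s.2) := by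
  set D₁ : β → Finset V := fun y => {w | Q w ≤ B * V₁ y w}
  set D₂ : α → Finset V := fun x => {w | Q w ≤ B * V₂ x w}
  have plausible (s : α × β) : ∑ w ∈ D₁ s.2 ∪ D₂ s.1, Q w ≤ 2 * B := by
    linarith [sum_union_le hQ.1 (D₁ s.2) (D₂ s.1), sum_filter_le_mul_le (Q := Q) (hV₁ s.2) hB,
      sum_filter_le_mul_le (Q := Q) (hV₂ s.1) hB]
  obtain ⟨w₀, -, -⟩ := exists_ne_zero_of_sum_ne_zero (hQ.2.trans_ne one_ne_zero)
  have : Nonempty V := ⟨w₀⟩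
  obtain ⟨bin, f, bad, hbad, hgood⟩ := exists_binned_codebook hP hW hQ hA hT plausible hL hm
  obtain ⟨g₁, hg₁⟩ := exists_decoder bin D₁
  obtain ⟨g₂, hg₂⟩ := exists_decoder bin D₂
  refine ⟨f, g₁, g₂, bad, hbad, fun s hs => ?_⟩
  obtain ⟨w, hw, hwT, unique⟩ := hgood s hs
  have decode₁ : g₁ (f s, s.2) = w :=
    hg₁ _ _ w hw (mem_filter.2 ⟨mem_univ w, hT₁ s w hwT⟩) fun w' hw' hD =>
      unique w' hw' (mem_union_left _ hD)
  have decode₂ : g₂ (f s, s.1) = w :=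
    hg₂ _ _ w hw (mem_filter.2 ⟨mem_univ w, hT₂ s w hwT⟩) fun w' hw' hD =>
      unique w' hw' (mem_union_right _ hD)
  exact ⟨decode₁.symm ▸ hwT, decode₂.trans decode₁.symm⟩

end TwoReceivers

section Typicality

open Filter

theorem IsPmf.exists_sum_mul_exp_lt_one {α : Type} [Fintype α] {p z : α → ℝ} (hp : IsPmf p)
    (hz : ∑ a, p a * z a < 0) : ∃ t > 0, ∑ a, p a * exp (t * z a) < 1 := by
  have deriv_mgf : HasDerivAt (fun t => ∑ a, p a * exp (t * z a)) (∑ a, p a * z a) 0 :=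
    HasDerivAt.fun_sum fun a _ => by
      simpa using (((hasDerivAt_id (0 : ℝ)).mul_const (z a)).exp).const_mul (p a)
  have slope_neg := (deriv_mgf.tendsto_slope.mono_left (nhdsGT_le_nhdsNE 0)).eventually_lt_const hz
  obtain ⟨t, hslope, ht : 0 < t⟩ := (slope_neg.and self_mem_nhdsWithin).exists
  rw [slope_def_field, sub_zero, div_lt_iff₀ ht] at hslope
  refine ⟨t, ht, ?_⟩
  simpa [hp.2] using hslope

variable {α β γ J : Type} [Fintype α] [Fintype β] [Fintype γ] [Fintype J]

theorem sum_pi_exists_nonneg_le {p : α → ℝ} (hp : IsPmf p) {t : J → ℝ} (ht : ∀ j, 0 ≤ t j)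
    (z : J → α → ℝ) (n : ℕ) :
    ∑ a : Fin n → α with ∃ j, 0 ≤ ∑ i, z j (a i), ∏ i, p (a i) ≤
      ∑ j, (∑ b, p b * exp (t j * z j b)) ^ n := by
  refine (sum_filter_le_sum_mul (z := fun a => ∑ j, ∏ i, exp (t j * z j (a i)))
    (IsPmf.pi fun _ => hp).1 (fun a => by positivity) ?_).trans_eq ?_
  · rintro a ⟨j, hj⟩
    refine le_trans ?_ (single_le_sum (f := fun j => ∏ i, exp (t j * z j (a i)))
      (fun j _ => by positivity) (mem_univ j))
    rw [← exp_sum, ← mul_sum]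
    exact one_le_exp (mul_nonneg (ht j) hj)
  · simp only [mul_sum]
    rw [sum_comm]
    refine sum_congr rfl fun j _ => ?_
    simpa using IsPmf.sum_pi_mul_prod (fun _ : Fin n => hp) univ fun _ b => exp (t j * z j b)

theorem tendsto_sum_pi_exists_nonneg {p : α → ℝ} (hp : IsPmf p) {z : J → α → ℝ}
    (hz : ∀ j, ∑ b, p b * z j b < 0) :
    Tendsto (fun n : ℕ => ∑ a : Fin n → α with ∃ j, 0 ≤ ∑ i, z j (a i), ∏ i, p (a i))
      atTop (𝓝 0) := by
  choose t ht hlt using fun j => hp.exists_sum_mul_exp_lt_one (hz j)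
  refine squeeze_zero (fun n => sum_nonneg fun a _ => (IsPmf.pi fun _ => hp).1 a)
    (sum_pi_exists_nonneg_le hp (fun j => (ht j).le) z) ?_
  have geometric := tendsto_finsetSum univ fun j _ =>
    tendsto_pow_atTop_nhds_zero_of_lt_one
      (sum_nonneg fun b _ => mul_nonneg (hp.1 b) (exp_pos (t j * z j b)).le) (hlt j)
  simpa using geometric

/-- The joint law of a source `q` and the output of the channel `W` driven by it. -/
def jointLaw (q : α → ℝ) (W : α → γ → ℝ) (t : α × γ) : ℝ := q t.1 * W t.1 t.2

theorem isPmf_jointLaw {q : α → ℝ} {W : α → γ → ℝ} (hq : IsPmf q) (hW : IsCondPmf W) :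
    IsPmf (jointLaw q W) :=
  ⟨fun t => mul_nonneg (hq.1 _) ((hW _).1 _), by
    simp only [jointLaw, Fintype.sum_prod_type, ← mul_sum, (hW _).2, mul_one, hq.2]⟩

/-- The words `w` for which every empirical mean of a score `z j` along `(s, w)` stays below the
threshold `c j`. -/
def typicalSet (z : J → (α × β) × γ → ℝ) (c : J → ℝ) {n : ℕ} (s : (Fin n → α) × (Fin n → β)) :
    Finset (Fin n → γ) :=
  {w | ∀ j, ∑ i, z j ((s.1 i, s.2 i), w i) < n * c j}

/-- The probability that `n` uses of the channel `W` take the source word out of its typical set. -/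
def atypicalProb (q : α × β → ℝ) (W : α × β → γ → ℝ) (z : J → (α × β) × γ → ℝ) (c : J → ℝ)
    (n : ℕ) : ℝ :=
  ∑ s : (Fin n → α) × (Fin n → β),
    iid q n s * ∑ w ∈ (typicalSet z c s)ᶜ, ∏ i, W (s.1 i, s.2 i) (w i)

theorem tendsto_atypicalProb {q : α × β → ℝ} (hq : IsPmf q) {W : α × β → γ → ℝ}
    (hW : IsCondPmf W) {z : J → (α × β) × γ → ℝ} {c : J → ℝ}
    (hz : ∀ j, ∑ t, jointLaw q W t * z j t < c j) :
    Tendsto (atypicalProb q W z c) atTop (𝓝 0) := by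
  have law := isPmf_jointLaw hq hW
  have mean_neg (j : J) : ∑ t, jointLaw q W t * (z j t - c j) < 0 := by
    simpa only [mul_sub, sum_sub_distrib, law.sum_mul_const, sub_neg] using hz j
  refine (tendsto_sum_pi_exists_nonneg law mean_neg).congr fun n => ?_
  set F : (Fin n → (α × β) × γ) → ℝ := fun a =>
    if ∃ j, 0 ≤ ∑ i, (z j (a i) - c j) then ∏ i, jointLaw q W (a i) else 0
  have atypical (s : (Fin n → α) × (Fin n → β)) :
      iid q n s * ∑ w ∈ (typicalSet z c s)ᶜ, ∏ i, W (s.1 i, s.2 i) (w i) =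
        ∑ w : Fin n → γ, F fun i => ((s.1 i, s.2 i), w i) := by
    rw [mul_sum, ← Fintype.sum_ite_mem]
    refine sum_congr rfl fun w _ => ?_
    simp [F, typicalSet, jointLaw, iid, prod_mul_distrib]
  rw [atypicalProb, sum_congr rfl fun s _ => atypical s, sum_filter,
    sum_prod_pi_eq_sum_pi_prod fun a => ∑ w : Fin n → γ, F fun i => (a i, w i),
    ← sum_prod_pi_eq_sum_pi_prod F, Fintype.sum_prod_type]

end Typicality

section BlockCodes

theorem prod_le_exp_mul_prod {ι : Type} [Fintype ι] {u v : ι → ℝ} (hu : ∀ i, 0 < u i)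
    (hv : ∀ i, 0 < v i) {c : ℝ} (h : ∑ i, log (u i / v i) ≤ c) :
    ∏ i, u i ≤ exp c * ∏ i, v i := by
  rw [← div_le_iff₀ (prod_pos fun i _ => hv i), ← prod_div_distrib,
    ← log_le_iff_le_exp (prod_pos fun i _ => div_pos (hu i) (hv i)),
    log_prod fun i _ => (div_pos (hu i) (hv i)).ne']
  exact h

theorem natCeil_exp_le {x : ℝ} (hx : 0 ≤ x) : (⌈exp x⌉₊ : ℝ) ≤ 2 * exp x :=
  Nat.ceil_le_two_mul (by linarith [one_le_exp hx])

theorem exp_neg_exp_le (x : ℝ) : exp (-exp x) ≤ exp (-x) :=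
  exp_le_exp.2 (neg_le_neg (by linarith [add_one_le_exp x]))

theorem binning_error_le {I R x : ℝ} (hI : 0 ≤ I) (hx : 0 ≤ x) :
    exp (-(⌈exp (I + 2 * x)⌉₊ / exp (I + x))) +
      ⌈exp (I + 2 * x)⌉₊ * (2 * exp (R - I + x)) / ⌈exp (R + 4 * x)⌉₊ ≤ 5 * exp (-x) := by
  have covering : exp (-(⌈exp (I + 2 * x)⌉₊ / exp (I + x))) ≤ exp (-x) := by
    refine (exp_le_exp.2 (neg_le_neg ?_)).trans (exp_neg_exp_le x)
    rw [le_div_iff₀ (exp_pos _), ← exp_add]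
    exact (exp_le_exp.2 (by linarith)).trans (Nat.le_ceil _)
  have packing : ⌈exp (I + 2 * x)⌉₊ * (2 * exp (R - I + x)) / ⌈exp (R + 4 * x)⌉₊ ≤
      4 * exp (-x) :=
    calc ⌈exp (I + 2 * x)⌉₊ * (2 * exp (R - I + x)) / ⌈exp (R + 4 * x)⌉₊
        ≤ 2 * exp (I + 2 * x) * (2 * exp (R - I + x)) / exp (R + 4 * x) := by
          gcongr
          · exact natCeil_exp_le (by positivity)
          · exact Nat.le_ceil _
      _ = 4 * (exp (I + 2 * x) * exp (R - I + x) / exp (R + 4 * x)) := by ring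
      _ = 4 * exp (-x) := by
        rw [← exp_add, ← exp_sub]
        ring_nf
  linarith

variable {𝒳 𝒴 Z : Type} [Fintype Z]

theorem IsCondPmf.prod {α : Type} {V : α → Z → ℝ} (hV : IsCondPmf V) (n : ℕ) :
    IsCondPmf fun (a : Fin n → α) (w : Fin n → Z) => ∏ i, V (a i) (w i) :=
  fun a => IsPmf.pi fun i => hV (a i)

theorem sum_mul_log_div_eq_condDiv_sub {α : Type} [Fintype α] (q : α → ℝ) {W Q V : α → Z → ℝ}
    (hW : ∀ s w, 0 < W s w) (hQ : ∀ s w, 0 < Q s w) (hV : ∀ s w, 0 < V s w) :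
    ∑ s, q s * ∑ w, W s w * log (Q s w / V s w) = condDiv q W V - condDiv q W Q := by
  simp only [condDiv, ← sum_sub_distrib, ← mul_sub,
    log_div (hW _ _).ne' (hV _ _).ne', log_div (hW _ _).ne' (hQ _ _).ne',
    log_div (hQ _ _).ne' (hV _ _).ne', sub_sub_sub_cancel_left]

/-- The quantities that a codeword has to keep below their means: the log-likelihood ratios that
govern the size of the codebook and of the bins, and the two distortions. -/
def codingScore (W : 𝒳 × 𝒴 → Z → ℝ) (Q : Z → ℝ) (V₁ : 𝒴 → Z → ℝ) (V₂ : 𝒳 → Z → ℝ)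
    (δ₁ : 𝒳 → Z → ℝ) (δ₂ : 𝒴 → Z → ℝ) : Fin 5 → (𝒳 × 𝒴) × Z → ℝ :=
  ![fun t => log (W t.1 t.2 / Q t.2), fun t => log (Q t.2 / V₁ t.1.2 t.2),
    fun t => log (Q t.2 / V₂ t.1.1 t.2), fun t => δ₁ t.1.1 t.2, fun t => δ₂ t.1.2 t.2]

/-- The upper bounds for `codingScore`: codebook rate `I`, total rate `R`, distortions `d₁`, `d₂`,
each relaxed by `η`. -/
def codingThreshold (I R d₁ d₂ η : ℝ) : Fin 5 → ℝ :=
  ![I + η, R - I + η, R - I + η, d₁ + η, d₂ + η]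

theorem mem_typicalSet_codingScore {W : 𝒳 × 𝒴 → Z → ℝ} {Q : Z → ℝ} {V₁ : 𝒴 → Z → ℝ}
    {V₂ : 𝒳 → Z → ℝ} {δ₁ : 𝒳 → Z → ℝ} {δ₂ : 𝒴 → Z → ℝ} {I R d₁ d₂ η : ℝ} {n : ℕ}
    {s : (Fin n → 𝒳) × (Fin n → 𝒴)} {w : Fin n → Z} :
    w ∈ typicalSet (codingScore W Q V₁ V₂ δ₁ δ₂) (codingThreshold I R d₁ d₂ η) s ↔
      ∑ i, log (W (s.1 i, s.2 i) (w i) / Q (w i)) < n * (I + η) ∧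
      ∑ i, log (Q (w i) / V₁ (s.2 i) (w i)) < n * (R - I + η) ∧
      ∑ i, log (Q (w i) / V₂ (s.1 i) (w i)) < n * (R - I + η) ∧
      ∑ i, δ₁ (s.1 i) (w i) < n * (d₁ + η) ∧ ∑ i, δ₂ (s.2 i) (w i) < n * (d₂ + η) := by
  simp [typicalSet, codingScore, codingThreshold, Fin.forall_fin_succ]

variable [Fintype 𝒳] [Fintype 𝒴]

theorem exists_block_code {q : 𝒳 × 𝒴 → ℝ} (hq : IsPmf q) {W : 𝒳 × 𝒴 → Z → ℝ} (hW : IsCondPmf W)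
    (hWpos : ∀ s w, 0 < W s w) {Q : Z → ℝ} (hQ : IsPmf Q) (hQpos : ∀ w, 0 < Q w)
    {V₁ : 𝒴 → Z → ℝ} (hV₁ : IsCondPmf V₁) (hV₁pos : ∀ y w, 0 < V₁ y w)
    {V₂ : 𝒳 → Z → ℝ} (hV₂ : IsCondPmf V₂) (hV₂pos : ∀ x w, 0 < V₂ x w)
    (δ₁ : 𝒳 → Z → ℝ) (δ₂ : 𝒴 → Z → ℝ) {I R d₁ d₂ η : ℝ} (hI : 0 ≤ I) (hR : 0 ≤ R) (hη : 0 ≤ η)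
    (n : ℕ) :
    ∃ (m : ℕ) (f : (Fin n → 𝒳) × (Fin n → 𝒴) → Fin m) (g₁ : Fin m × (Fin n → 𝒴) → Fin n → Z)
      (g₂ : Fin m × (Fin n → 𝒳) → Fin n → Z) (bad : Finset ((Fin n → 𝒳) × (Fin n → 𝒴))),
      log m ≤ n * (R + 4 * η) + log 2 ∧
      ∑ s ∈ bad, iid q n s ≤ atypicalProb q W (codingScore W Q V₁ V₂ δ₁ δ₂)
        (codingThreshold I R d₁ d₂ η) n + 5 * exp (-(n * η)) ∧
      ∀ s ∉ bad, ∑ i, δ₁ (s.1 i) (g₁ (f s, s.2) i) ≤ n * (d₁ + η) ∧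
        ∑ i, δ₂ (s.2 i) (g₁ (f s, s.2) i) ≤ n * (d₂ + η) ∧ g₂ (f s, s.1) = g₁ (f s, s.2) := by
  have mem_T {s : (Fin n → 𝒳) × (Fin n → 𝒴)} {w : Fin n → Z} :=
    (mem_typicalSet_codingScore (W := W) (Q := Q) (V₁ := V₁) (V₂ := V₂) (δ₁ := δ₁) (δ₂ := δ₂)
      (I := I) (R := R) (d₁ := d₁) (d₂ := d₂) (η := η) (s := s) (w := w)).1
  have hnη : 0 ≤ n * η := by positivity
  set m : ℕ := ⌈exp (n * R + 4 * (n * η))⌉₊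
  have m_pos : 0 < m := Nat.ceil_pos.2 (exp_pos _)
  have log_m : log m ≤ n * (R + 4 * η) + log 2 := by
    refine (log_le_log (by positivity) (natCeil_exp_le (by positivity))).trans_eq ?_
    rw [log_mul two_ne_zero (exp_pos _).ne', log_exp]
    ring
  obtain ⟨f, g₁, g₂, bad, hbad, hgood⟩ := exists_binned_code (hq.iid n)
    (fun s => IsPmf.pi fun i => hW (s.1 i, s.2 i)) (IsPmf.pi fun _ => hQ) (hV₁.prod n) (hV₂.prod n)
    (exp_pos (n * I + n * η)) (exp_pos (n * R - n * I + n * η)).le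
    (T := typicalSet (codingScore W Q V₁ V₂ δ₁ δ₂) (codingThreshold I R d₁ d₂ η))
    (fun s w hw => prod_le_exp_mul_prod (fun _ => hWpos _ _) (fun _ => hQpos _)
      ((mem_T hw).1.le.trans_eq (by ring)))
    (fun s w hw => prod_le_exp_mul_prod (fun _ => hQpos _) (fun _ => hV₁pos _ _)
      ((mem_T hw).2.1.le.trans_eq (by ring)))
    (fun s w hw => prod_le_exp_mul_prod (fun _ => hQpos _) (fun _ => hV₂pos _ _)
      ((mem_T hw).2.2.1.le.trans_eq (by ring)))
    (Nat.ceil_pos.2 (exp_pos (n * I + 2 * (n * η)))) m_pos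
  refine ⟨m, f, g₁, g₂, bad, log_m, ?_, fun s hs => ?_⟩
  · rw [atypicalProb]
    linarith [binning_error_le (R := n * R) (by positivity : 0 ≤ n * I) hnη]
  · obtain ⟨hT, agree⟩ := hgood s hs
    obtain ⟨-, -, -, h₁, h₂⟩ := mem_T hT
    exact ⟨h₁.le, h₂.le, agree⟩

end BlockCodes

section Achievability

open Filter

variable {𝒳 𝒴 Z : Type} [Fintype 𝒳] [Fintype 𝒴] [Fintype Z]

theorem sum_jointLaw_mul {α : Type} [Fintype α] (q : α → ℝ) (W : α → Z → ℝ) (z : α × Z → ℝ) :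
    ∑ t, jointLaw q W t * z t = ∑ s, q s * ∑ w, W s w * z (s, w) := by
  simp only [jointLaw, Fintype.sum_prod_type, mul_sum, mul_assoc]

theorem sum_jointLaw_mul_codingScore_lt {q : 𝒳 × 𝒴 → ℝ} {W : 𝒳 × 𝒴 → Z → ℝ}
    (hWpos : ∀ s w, 0 < W s w) {Q : Z → ℝ} (hQpos : ∀ w, 0 < Q w)
    {V₁ : 𝒴 → Z → ℝ} (hV₁pos : ∀ y w, 0 < V₁ y w) {V₂ : 𝒳 → Z → ℝ} (hV₂pos : ∀ x w, 0 < V₂ x w)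
    {δ₁ : 𝒳 → Z → ℝ} {δ₂ : 𝒴 → Z → ℝ} {R d₁ d₂ η : ℝ} (hη : 0 < η)
    (hR₁ : condDiv q W (fun s => V₁ s.2) ≤ R) (hR₂ : condDiv q W (fun s => V₂ s.1) ≤ R)
    (hd₁ : ∑ s, q s * ∑ w, W s w * δ₁ s.1 w ≤ d₁) (hd₂ : ∑ s, q s * ∑ w, W s w * δ₂ s.2 w ≤ d₂)
    (j : Fin 5) :
    ∑ t, jointLaw q W t * codingScore W Q V₁ V₂ δ₁ δ₂ j t <
      codingThreshold (condDiv q W fun _ => Q) R d₁ d₂ η j := by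
  have mean₁ := sum_mul_log_div_eq_condDiv_sub q hWpos (fun _ => hQpos) fun s => hV₁pos s.2
  have mean₂ := sum_mul_log_div_eq_condDiv_sub q hWpos (fun _ => hQpos) fun s => hV₂pos s.1
  rw [sum_jointLaw_mul]
  fin_cases j
  · exact lt_add_of_pos_right _ hη
  · exact mean₁.trans_lt ((sub_le_sub_right hR₁ _).trans_lt (lt_add_of_pos_right _ hη))
  · exact mean₂.trans_lt ((sub_le_sub_right hR₂ _).trans_lt (lt_add_of_pos_right _ hη))
  · exact hd₁.trans_lt (lt_add_of_pos_right _ hη)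
  · exact hd₂.trans_lt (lt_add_of_pos_right _ hη)

theorem exists_block_code_of_testChannel {q : 𝒳 × 𝒴 → ℝ} (hq : IsPmf q) {W : 𝒳 × 𝒴 → Z → ℝ}
    (hW : IsCondPmf W) (hWpos : ∀ s w, 0 < W s w)
    {V₁ : 𝒴 → Z → ℝ} (hV₁ : IsCondPmf V₁) (hV₁pos : ∀ y w, 0 < V₁ y w)
    {V₂ : 𝒳 → Z → ℝ} (hV₂ : IsCondPmf V₂) (hV₂pos : ∀ x w, 0 < V₂ x w)
    {δ₁ : 𝒳 → Z → ℝ} {δ₂ : 𝒴 → Z → ℝ} {R d₁ d₂ η : ℝ} (hη : 0 < η)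
    (hR₁ : condDiv q W (fun s => V₁ s.2) ≤ R) (hR₂ : condDiv q W (fun s => V₂ s.1) ≤ R)
    (hd₁ : ∑ s, q s * ∑ w, W s w * δ₁ s.1 w ≤ d₁)
    (hd₂ : ∑ s, q s * ∑ w, W s w * δ₂ s.2 w ≤ d₂) :
    ∃ (n m : ℕ) (f : (Fin n → 𝒳) × (Fin n → 𝒴) → Fin m) (g₁ : Fin m × (Fin n → 𝒴) → Fin n → Z)
      (g₂ : Fin m × (Fin n → 𝒳) → Fin n → Z) (bad : Finset ((Fin n → 𝒳) × (Fin n → 𝒴))),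
      0 < n ∧ log m ≤ n * (R + η) ∧ ∑ s ∈ bad, iid q n s ≤ η ∧
      ∀ s ∉ bad, ∑ i, δ₁ (s.1 i) (g₁ (f s, s.2) i) ≤ n * (d₁ + η) ∧
        ∑ i, δ₂ (s.2 i) (g₁ (f s, s.2) i) ≤ n * (d₂ + η) ∧ g₂ (f s, s.1) = g₁ (f s, s.2) := by
  obtain ⟨s₀, -, -⟩ := exists_ne_zero_of_sum_ne_zero (hq.2.trans_ne one_ne_zero)
  set Q : Z → ℝ := V₁ s₀.2
  have hQ : IsPmf Q := hV₁ s₀.2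
  have hQpos : ∀ w, 0 < Q w := hV₁pos s₀.2
  have hI : 0 ≤ condDiv q W fun _ => Q := condDiv_nonneg hq.1 hW (fun _ => hQ) fun _ => hQpos
  have hR : 0 ≤ R := (condDiv_nonneg hq.1 hW (fun s => hV₁ s.2) fun s => hV₁pos s.2).trans hR₁
  have hη' : 0 < η / 5 := by positivity
  have scaled : Tendsto (fun n : ℕ => n * (η / 5)) atTop atTop :=
    tendsto_natCast_atTop_atTop.atTop_mul_const hη'
  have atypical_vanishes := tendsto_atypicalProb hq hW
    (sum_jointLaw_mul_codingScore_lt hWpos hQpos hV₁pos hV₂pos hη' hR₁ hR₂ hd₁ hd₂)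
  have error_vanishes := atypical_vanishes.add
    ((tendsto_exp_neg_atTop_nhds_zero.comp scaled).const_mul 5)
  rw [mul_zero, add_zero] at error_vanishes
  obtain ⟨n, small_error, log_two_le, hn⟩ := ((error_vanishes.eventually_le_const hη).and
    ((scaled.eventually_ge_atTop (log 2)).and (eventually_gt_atTop 0))).exists
  obtain ⟨m, f, g₁, g₂, bad, hm, hbad, hgood⟩ := exists_block_code hq hW hWpos hQ hQpos hV₁ hV₁pos
    hV₂ hV₂pos δ₁ δ₂ (d₁ := d₁) (d₂ := d₂) hI hR hη'.le n
  have relax (d : ℝ) : n * (d + η / 5) ≤ n * (d + η) := by gcongr; linarith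
  refine ⟨n, m, f, g₁, g₂, bad, hn, ?_, hbad.trans small_error, fun s hs => ?_⟩
  · linarith
  · obtain ⟨h₁, h₂, agree⟩ := hgood s hs
    exact ⟨h₁.trans (relax d₁), h₂.trans (relax d₂), agree⟩

theorem sum_mul_mean_le {S α β : Type} [Fintype S] {P : S → ℝ} (hP : IsPmf P) {δ : α → β → ℝ}
    {D K : ℝ} (hK : ∀ a w, δ a w ≤ D + K) {n : ℕ} (hn : 0 < n) (a : S → Fin n → α)
    (b : S → Fin n → β) {bad : Finset S} (hgood : ∀ s ∉ bad, ∑ i, δ (a s i) (b s i) ≤ n * D) :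
    ∑ s, P s * ((n : ℝ)⁻¹ * ∑ i, δ (a s i) (b s i)) ≤ D + K * ∑ s ∈ bad, P s := by
  have hn' : (0 : ℝ) < n := Nat.cast_pos.2 hn
  have mean_le (s : S) : (n : ℝ)⁻¹ * ∑ i, δ (a s i) (b s i) ≤ D + if s ∈ bad then K else 0 := by
    rw [inv_mul_le_iff₀ hn']
    split_ifs with hs
    · exact (sum_le_sum fun i _ => hK (a s i) (b s i)).trans_eq (by simp [mul_add])
    · simpa using hgood s hs
  refine (sum_le_sum fun s _ => mul_le_mul_of_nonneg_left (mean_le s) (hP.1 s)).trans_eq ?_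
  simp only [mul_add, sum_add_distrib, hP.sum_mul_const, mul_ite, mul_zero, Fintype.sum_ite_mem,
    ← sum_mul, mul_comm K]

theorem sum_ite_eq_le_sum_of_eq_off {S A : Type} [Fintype S] [DecidableEq A] {P : S → ℝ}
    (hP : ∀ s, 0 ≤ P s) {u v : S → A} {bad : Finset S} (h : ∀ s ∉ bad, u s = v s) :
    ∑ s, (if u s = v s then 0 else P s) ≤ ∑ s ∈ bad, P s := by
  rw [← Fintype.sum_ite_mem bad P]
  refine sum_le_sum fun s _ => ?_
  split_ifs with h₁ h₂ h₂
  exacts [hP s, le_rfl, le_rfl, absurd (h s h₂) h₁]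

theorem logb_two_div_le {n m : ℕ} (hn : 0 < n) {R η ε : ℝ} (hm : log m ≤ n * (R + η))
    (hη : η ≤ ε * log 2) : logb 2 m / n ≤ R / log 2 + ε := by
  have log_two_pos : 0 < log 2 := log_pos one_lt_two
  rw [div_le_iff₀ (Nat.cast_pos.2 hn), logb, div_le_iff₀ log_two_pos, mul_right_comm, add_mul,
    div_mul_cancel₀ _ log_two_pos.ne', mul_comm]
  exact hm.trans (by gcongr)

theorem crAchievable_of_testChannel {Xh Yh : Type} {q : 𝒳 × 𝒴 → ℝ} (hq : IsPmf q)
    {W : 𝒳 × 𝒴 → Z → ℝ} (hW : IsCondPmf W) (hWpos : ∀ s w, 0 < W s w)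
    {V₁ : 𝒴 → Z → ℝ} (hV₁ : IsCondPmf V₁) (hV₁pos : ∀ y w, 0 < V₁ y w)
    {V₂ : 𝒳 → Z → ℝ} (hV₂ : IsCondPmf V₂) (hV₂pos : ∀ x w, 0 < V₂ x w)
    {δ₁ : 𝒳 → Xh → ℝ} {δ₂ : 𝒴 → Yh → ℝ} (π₁ : Z → Xh) (π₂ : Z → Yh) {R d₁ d₂ : ℝ}
    (hR₁ : condDiv q W (fun s => V₁ s.2) ≤ R) (hR₂ : condDiv q W (fun s => V₂ s.1) ≤ R)
    (hd₁ : ∑ s, q s * ∑ w, W s w * δ₁ s.1 (π₁ w) ≤ d₁)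
    (hd₂ : ∑ s, q s * ∑ w, W s w * δ₂ s.2 (π₂ w) ≤ d₂) :
    CRAchievable q δ₁ δ₂ d₁ d₂ (R / log 2) := by
  intro ε hε
  obtain ⟨K, hK, bound₁, bound₂⟩ : ∃ K : ℝ, 1 ≤ K ∧ (∀ x w, δ₁ x (π₁ w) ≤ d₁ + K) ∧
      ∀ y w, δ₂ y (π₂ w) ≤ d₂ + K := by
    obtain ⟨B₁, hB₁⟩ := (Set.finite_range fun t : 𝒳 × Z => δ₁ t.1 (π₁ t.2) - d₁).bddAbove
    obtain ⟨B₂, hB₂⟩ := (Set.finite_range fun t : 𝒴 × Z => δ₂ t.1 (π₂ t.2) - d₂).bddAbove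
    refine ⟨max 1 (max B₁ B₂), le_max_left _ _, fun x w => ?_, fun y w => ?_⟩
    · exact sub_le_iff_le_add'.1 ((hB₁ ⟨(x, w), rfl⟩).trans (by simp))
    · exact sub_le_iff_le_add'.1 ((hB₂ ⟨(y, w), rfl⟩).trans (by simp))
  set η := ε / (K + 1)
  have hη : 0 < η := by positivity
  have η_spec : η * (K + 1) = ε := div_mul_cancel₀ _ (by positivity)
  obtain ⟨n, m, f, g₁, g₂, bad, hn, hm, hbad, hgood⟩ := exists_block_code_of_testChannel hq hW hWpos
    hV₁ hV₁pos hV₂ hV₂pos (δ₁ := fun x w => δ₁ x (π₁ w)) (δ₂ := fun y w => δ₂ y (π₂ w)) hη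
    hR₁ hR₂ hd₁ hd₂
  have bad_le : ∑ s ∈ bad, iid q n s ≤ ε := hbad.trans (by nlinarith)
  have distortion_le (d : ℝ) : d + η + K * ∑ s ∈ bad, iid q n s ≤ d + ε := by
    nlinarith
  refine ⟨n, m, f, fun t => π₁ ∘ g₁ t, fun t => π₂ ∘ g₂ t, fun t => π₂ ∘ g₁ t, fun t => π₁ ∘ g₂ t,
    hn, ?_, ?_, ?_, ?_, ?_⟩
  · exact logb_two_div_le hn hm (by nlinarith [log_two_gt_d9])
  · exact (sum_mul_mean_le (hq.iid n) (fun x w => (bound₁ x w).trans (by linarith)) hn _ _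
      fun s hs => (hgood s hs).1).trans (distortion_le d₁)
  · refine (sum_mul_mean_le (hq.iid n) (fun y w => (bound₂ y w).trans (by linarith)) hn _ _
      fun s hs => ?_).trans (distortion_le d₂)
    rw [(hgood s hs).2.2]
    exact (hgood s hs).2.1
  · exact (sum_ite_eq_le_sum_of_eq_off (hq.iid n).1 fun s hs =>
      congrArg (π₁ ∘ ·) (hgood s hs).2.2).trans bad_le
  · exact (sum_ite_eq_le_sum_of_eq_off (hq.iid n).1 fun s hs =>
      congrArg (π₂ ∘ ·) (hgood s hs).2.2.symm).trans bad_le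

end Achievability

section TestChannel

variable {ρ α d : ℝ}

/-- The test channel from a source pair to a common reconstruction bit: it passes the common value
of `x` and `y` through a binary symmetric channel with crossover probability `α`, and tosses a fair
coin if the two differ. -/
def consensusChannel (α : ℝ) (s : Bool × Bool) (z : Bool) : ℝ :=
  if s.1 = s.2 then bsc α s.1 z else 1 / 2

theorem consensusChannel_pos (hα0 : 0 < α) (hα1 : α < 1) (s : Bool × Bool) (z : Bool) :
    0 < consensusChannel α s z := by
  unfold consensusChannel
  split_ifs
  exacts [bsc_pos hα0 hα1 _ _, one_half_pos]

theorem isCondPmf_consensusChannel (hα0 : 0 < α) (hα1 : α < 1) :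
    IsCondPmf (consensusChannel α) := by
  refine fun s => ⟨fun z => (consensusChannel_pos hα0 hα1 s z).le, ?_⟩
  unfold consensusChannel
  split_ifs
  · exact (isCondPmf_bsc hα0.le hα1.le s.1).2
  · norm_num

theorem sum_negMulLog_consensusChannel (α : ℝ) (s : Bool × Bool) :
    ∑ z, negMulLog (consensusChannel α s z) = if s.1 = s.2 then binEntropy α else log 2 := by
  unfold consensusChannel
  split_ifs
  · rw [binEntropy_eq_negMulLog_add_negMulLog_one_sub]
    cases s.1 <;> simp [bsc, add_comm]
  · simp [negMulLog]

theorem sum_consensusChannel_mul_dHam {s : Bool × Bool} {b : Bool} (hb : b = s.1 ∨ b = s.2) :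
    ∑ z, consensusChannel α s z * dHam b z = if s.1 = s.2 then α else 1 / 2 := by
  obtain ⟨x, y⟩ := s
  cases x <;> cases y <;> cases b <;> simp_all [consensusChannel, bsc, dHam]

theorem sum_dsbs_mul_consensusChannel_mul_dHam (hd : d = ρ / 2 + (1 - ρ) * α)
    {b : Bool × Bool → Bool} (hb : ∀ s, b s = s.1 ∨ b s = s.2) :
    ∑ s, dsbs ρ s * ∑ z, consensusChannel α s z * dHam (b s) z = d := by
  simp only [sum_consensusChannel_mul_dHam (hb _), sum_dsbs_mul_ite, hd]
  ring

theorem condDiv_bsc {S : Type} [Fintype S] {q : S → ℝ} (hq : IsPmf q) {W : S → Bool → ℝ}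
    (hW : IsCondPmf W) (hWpos : ∀ s z, 0 < W s z) (hd0 : 0 < d) (hd1 : d < 1) (b : S → Bool) :
    condDiv q W (fun s => bsc d (b s)) = binEntropy d - ∑ s, q s * ∑ z, negMulLog (W s z) +
      log ((1 - d) / d) * (∑ s, q s * ∑ z, W s z * dHam (b s) z - d) := by
  have dHam_symm (z c : Bool) : dHam z c = dHam c z := by cases z <;> cases c <;> simp [dHam]
  have pointwise (s : S) (z : Bool) : W s z * log (W s z / bsc d (b s) z) =
      W s z * (binEntropy d - log ((1 - d) / d) * d) - negMulLog (W s z) +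
        W s z * dHam (b s) z * log ((1 - d) / d) := by
    rw [log_div (hWpos s z).ne' (bsc_pos hd0 hd1 _ _).ne', log_bsc hd0 hd1, negMulLog, dHam_symm]
    ring
  simp only [condDiv, pointwise, sum_add_distrib, sum_sub_distrib, (hW _).sum_mul_const, mul_add,
    mul_sub, ← sum_mul, ← mul_assoc, hq.2]
  ring

theorem condDiv_dsbs_consensusChannel (hρ0 : 0 ≤ ρ) (hρ1 : ρ ≤ 1) (hα0 : 0 < α) (hα1 : α < 1)
    (hd0 : 0 < d) (hd1 : d < 1) (hd : d = ρ / 2 + (1 - ρ) * α)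
    {b : Bool × Bool → Bool} (hb : ∀ s, b s = s.1 ∨ b s = s.2) :
    condDiv (dsbs ρ) (consensusChannel α) (fun s => bsc d (b s)) =
      binEntropy d - ρ * log 2 - (1 - ρ) * binEntropy α := by
  rw [condDiv_bsc (isPmf_dsbs hρ0 hρ1) (isCondPmf_consensusChannel hα0 hα1)
    (consensusChannel_pos hα0 hα1) hd0 hd1, sum_dsbs_mul_consensusChannel_mul_dHam hd hb]
  simp only [sum_negMulLog_consensusChannel, sum_dsbs_mul_ite]
  ring

theorem crAchievable_dsbs (hρ0 : 0 ≤ ρ) (hρ1 : ρ ≤ 1) (hα0 : 0 < α) (hα1 : α < 1)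
    (hd0 : 0 < d) (hd1 : d < 1) (hd : d = ρ / 2 + (1 - ρ) * α) :
    CRAchievable (dsbs ρ) dHam dHam d d
      ((binEntropy d - ρ * log 2 - (1 - ρ) * binEntropy α) / log 2) :=
  crAchievable_of_testChannel (isPmf_dsbs hρ0 hρ1) (isCondPmf_consensusChannel hα0 hα1)
    (consensusChannel_pos hα0 hα1) (isCondPmf_bsc hd0.le hd1.le) (bsc_pos hd0 hd1)
    (isCondPmf_bsc hd0.le hd1.le) (bsc_pos hd0 hd1) id id
    (condDiv_dsbs_consensusChannel hρ0 hρ1 hα0 hα1 hd0 hd1 hd fun _ => .inr rfl).le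
    (condDiv_dsbs_consensusChannel hρ0 hρ1 hα0 hα1 hd0 hd1 hd fun _ => .inl rfl).le
    (sum_dsbs_mul_consensusChannel_mul_dHam hd fun _ => .inl rfl).le
    (sum_dsbs_mul_consensusChannel_mul_dHam hd fun _ => .inr rfl).le

end TestChannel

section RateDistortionFunction

variable {𝒳 𝒴 Xh Yh : Type} [Fintype 𝒳] [Fintype 𝒴] {q : 𝒳 × 𝒴 → ℝ} {δ₁ : 𝒳 → Xh → ℝ}
  {δ₂ : 𝒴 → Yh → ℝ} {d₁ d₂ r : ℝ}

theorem CRAchievable.nonneg (h : CRAchievable q δ₁ δ₂ d₁ d₂ r) : 0 ≤ r := by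
  refine le_of_forall_pos_le_add fun ε hε => ?_
  obtain ⟨n, m, -, -, -, -, -, -, hrate, -⟩ := h ε hε
  exact (div_nonneg (div_nonneg (log_natCast_nonneg m) (log_pos one_lt_two).le)
    n.cast_nonneg).trans hrate

theorem CRAchievable.CRRD_le (h : CRAchievable q δ₁ δ₂ d₁ d₂ r) : CRRD q δ₁ δ₂ d₁ d₂ ≤ r :=
  csInf_le ⟨0, fun _ hr => hr.1⟩ ⟨h.nonneg, h⟩

theorem CRAchievable.le_CRRD (h : CRAchievable q δ₁ δ₂ d₁ d₂ r) {c : ℝ}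
    (hc : ∀ r', CRAchievable q δ₁ δ₂ d₁ d₂ r' → c ≤ r') : c ≤ CRRD q δ₁ δ₂ d₁ d₂ :=
  le_csInf ⟨r, h.nonneg, h⟩ fun r' hr' => hc r' hr'.2

end RateDistortionFunction

section LargeDistortion

variable {ρ d : ℝ}

theorem binEnt_eq_binEntropy_div (x : ℝ) : binEnt x = binEntropy x / log 2 := by
  rw [binEnt, binEntropy_eq_negMulLog_add_negMulLog_one_sub, negMulLog, negMulLog, logb, logb]
  ring

theorem one_sub_two_mul_sq_lt (hlo : 1 / 2 - √(1 - 2 * ρ) / 2 < d) (hhi : d ≤ 1 / 2) :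
    (1 - 2 * d) ^ 2 < 1 - 2 * ρ :=
  (lt_sqrt (by linarith)).1 (by linarith)

theorem crAchievable_dsbs_of_sq_lt (hρ0 : 0 ≤ ρ) (hd1 : d ≤ 1 / 2)
    (hγ : (1 - 2 * d) ^ 2 < 1 - 2 * ρ) :
    CRAchievable (dsbs ρ) dHam dHam d d
      (binEnt d - ρ - (1 - ρ) * binEnt ((2 * d - ρ) / (2 * (1 - ρ)))) := by
  have hρd : ρ < 2 * d := by nlinarith [sq_nonneg d]
  have hρ1 : 0 < 1 - ρ := by linarith
  have distortion : d = ρ / 2 + (1 - ρ) * ((2 * d - ρ) / (2 * (1 - ρ))) := by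
    field_simp
    ring
  have achievable := crAchievable_dsbs hρ0 (by linarith) (div_pos (by linarith) (by linarith))
    ((div_lt_one (by linarith)).2 (by linarith)) (by linarith) (by linarith) distortion
  have log_two_ne : log 2 ≠ 0 := (log_pos one_lt_two).ne'
  simpa only [binEnt_eq_binEntropy_div, sub_div, mul_div_cancel_right₀ _ log_two_ne,
    mul_div_assoc] using achievable

theorem binEnt_sub_lt_CRRD_dsbs (hρ0 : 0 ≤ ρ) (hd1 : d ≤ 1 / 2)
    (hγ : (1 - 2 * d) ^ 2 < 1 - 2 * ρ) :
    binEnt ρ - binEnt d < CRRD (dsbs ρ) dHam dHam d d := by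
  set gain := (1 - 2 * ρ - (1 - 2 * d) ^ 2) ^ 2 / 128
  have gain_pos : 0 < gain := div_pos (sq_pos_of_pos (sub_pos.2 hγ)) (by norm_num)
  have log_two_pos : 0 < log 2 := log_pos one_lt_two
  calc binEnt ρ - binEnt d < (binEntropy ρ - binEntropy d + gain) / log 2 := by
        rw [binEnt_eq_binEntropy_div, binEnt_eq_binEntropy_div, ← sub_div]
        gcongr
        exact lt_add_of_pos_right _ gain_pos
    _ ≤ CRRD (dsbs ρ) dHam dHam d d :=
        (crAchievable_dsbs_of_sq_lt hρ0 hd1 hγ).le_CRRD fun r hr => (div_le_iff₀ log_two_pos).2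
          (hr.dsbs_rate_lower_bound hρ0 (by nlinarith) (by nlinarith) hd1 hγ.le)

end LargeDistortion

end TWR

open TWR in
/-- Theorem 3, part (iii): for the DSBS with Hamming
distortions and `d ∈ (d*, 1/2]`, `R_CR(d,d) ≠ h(ρ) − h(d)` and
`R_CR(d,d) ≤ h(d) − ρ − (1−ρ)·h((2d−ρ)/(2(1−ρ)))`. -/
theorem dsbs_cr_large_distortion
    (ρ : ℝ) (hρ : ρ ∈ Set.Icc (0 : ℝ) (1 / 2)) (d : ℝ)
    (hdlo : 1 / 2 - Real.sqrt (1 - 2 * ρ) / 2 < d) (hdhi : d ≤ 1 / 2) :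
    CRRD (dsbs ρ) (dHam (α := Bool)) (dHam (α := Bool)) d d ≠ binEnt ρ - binEnt d ∧
    CRRD (dsbs ρ) (dHam (α := Bool)) (dHam (α := Bool)) d d ≤
      binEnt d - ρ - (1 - ρ) * binEnt ((2 * d - ρ) / (2 * (1 - ρ))) := by
  have hγ := one_sub_two_mul_sq_lt hdlo hdhi
  exact ⟨(binEnt_sub_lt_CRRD_dsbs hρ.1 hdhi hγ).ne',
    (crAchievable_dsbs_of_sq_lt hρ.1 hdhi hγ).CRRD_le⟩
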